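/- In G₉, each positive cone Cᵢ of a vertex v receives a charge of at most max{2, cᵢ(v)+1} and each negative cone C̄ᵢ receives a charge of at most c̄ᵢ(v)+1, where cᵢ(v) and c̄ᵢ(v) count constraints incident to v in the respective cone; consequently every vertex v of G₉ has degree at most c(v) + 9, where c(v) is the total number of constraints incident to v. -/

import Mathlib

/-!
Measuring displacements along the bisectors of the three positive cones gives three linear
functionals `hf 0, hf 1, hf 2` with sum zero; `p` lies in the cone `Cᵢ` of `u` exactly when the two
functionals other than `hf i` decrease from `u` to `p`. In these coordinates all cone arguments
become symmetric in the indices and all geometric claims become polynomial inequalities.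

*Visibility.* If no constraint enters a triangle `aqp` through the sides `aq` and `qp`, the vertex
of the triangle forming the smallest positive angle with `aq` is visible from `a`, and no constraint
at `a` separates it from `q` (`Setup.vis`). Applied to a part of an edge `ab`, this contradicts the
minimality of `b` as soon as the triangle is closer than `b` (`Setup.no_closer`). It follows that
edges of the half-θ₆-graph belonging to cones with different indices do not cross
(`Setup.planar`).

*Consecutive canonical vertices.* Let `v, w` be consecutive canonical vertices of `u`. The same
visibility argument shows that `v` and `w` do not lie in each other's cone `Cᵢ`
(`Consec.not_above`), and that the triangle `uvw` is empty (`Consec.empty`). As the edge `uw` is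
crossed neither by constraints nor by edges of the other two cone indices, no such segment at `v`
lies in the angle between `vu` and `vw` (`Consec.no_constr`, `Consec.no_edge`). So, on each side of
the cone `Cᵢ` of `v`, a canonical path neighbour of `v` determines its apex as the extreme vertex to
which `v` adds an edge, and there is at most one such neighbour (`Consec.side_unique`).

*Positive cones.* Edges added by `v` in `Cᵢ` are pairwise separated by constraints, so there are at
most `cᵢ(v) + 1` of them. Each charge of a closest canonical vertex is such an edge, and a canonical
path edge can be charged to the edge `vu` to its apex instead: `v` is not a closest canonical vertex
of `u`, since its neighbour on the path is closer. The exceptional case is that both sides share one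
apex; then no constraint separates that apex from anything, and the charge is `2`.

*Negative cones.* Closest canonical vertices of `v` in `C̄ᵢ` are pairwise separated by constraints.
A canonical path edge `vw` charged to `C̄ᵢ` excludes any edge into `v` in that cone, which would
lie in the angle `uvw`; it also excludes a second canonical path edge (`Setup.neg_single`).

*Degree.* Every edge at `v` is charged to one of the six cones (`Setup.charged`), the cones are
disjoint, and `max (2, c + 1) ≤ c + 2`.
-/

open Real Set

noncomputable section

namespace CHT6

/-- Points in the plane. -/
abbrev Pt := ℝ × ℝ

/-- Euclidean distance. -/
def dst (p q : Pt) : ℝ := Real.sqrt ((p.1 - q.1) ^ 2 + (p.2 - q.2) ^ 2)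

/-- Unsigned angle at `q` between segments `qp` and `qr`. -/
def ang (p q r : Pt) : ℝ :=
  Real.arccos (((p.1 - q.1) * (r.1 - q.1) + (p.2 - q.2) * (r.2 - q.2)) / (dst p q * dst r q))

/-- 2D cross product. -/
def crossP (a b : Pt) : ℝ := a.1 * b.2 - a.2 * b.1

/-- The segments `ab` and `cd` properly cross: their relative interiors meet. -/
def PCross (a b c d : Pt) : Prop := (openSegment ℝ a b ∩ openSegment ℝ c d).Nonempty

/-- `uz` is a constraint of `S`. -/
def Constr (S : Set (Pt × Pt)) (u z : Pt) : Prop := (u, z) ∈ S ∨ (z, u) ∈ S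

/-- `u` and `v` see each other: `uv` is a constraint or no constraint properly crosses it. -/
def CanSee (S : Set (Pt × Pt)) (u v : Pt) : Prop :=
  Constr S u v ∨ ∀ c ∈ S, ¬ PCross c.1 c.2 u v

/-- Rotation of the plane by angle `θ` about the origin. -/
def rot (θ : ℝ) (p : Pt) : Pt :=
  (Real.cos θ * p.1 - Real.sin θ * p.2, Real.sin θ * p.1 + Real.cos θ * p.2)

/-- `p` relative to `u`, rotated so that the positive cone `Cᵢ` becomes the upward cone. -/
def rel (i : ℕ) (u p : Pt) : Pt := rot (-(2 * Real.pi * i / 3)) (p - u)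

/-- `p` lies in the (open) positive cone `Cᵢ` of `u` (width π/3; `C₀` is upward vertical). -/
def inPos (i : ℕ) (u p : Pt) : Prop := Real.sqrt 3 * |(rel i u p).1| < (rel i u p).2

/-- `p` lies in the negative cone `C̄ᵢ` of `u`. -/
def inNeg (i : ℕ) (u p : Pt) : Prop := inPos i p u

/-- Length of the projection of `p` onto the bisector of the positive cone `Cᵢ` of `u`. -/
def projLen (i : ℕ) (u p : Pt) : ℝ := (rel i u p).2

/-- Projected distance of `p` from `u` for the negative cone `C̄ᵢ` of `u`. -/
def negProj (i : ℕ) (u p : Pt) : ℝ := projLen i p u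

/-- `p` and `q` are not strictly separated, within the cone `cone` at `u`, by a constraint
incident to `u`: they lie in a common (closed) subcone. -/
def SameSubIn (cone : Pt → Pt → Prop) (S : Set (Pt × Pt)) (u p q : Pt) : Prop :=
  ∀ z, Constr S u z → cone u z →
    ¬ (crossP (z - u) (p - u) * crossP (z - u) (q - u) < 0)

def SameSubPos (S : Set (Pt × Pt)) (i : ℕ) (u p q : Pt) : Prop := SameSubIn (inPos i) S u p q

def SameSubNeg (S : Set (Pt × Pt)) (i : ℕ) (u p q : Pt) : Prop := SameSubIn (inNeg i) S u p q

/-- General position: no two points of `P` define a line parallel to one of the six cone rays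
(slopes `0`, `√3`, `-√3`), and no three points of `P` are collinear. -/
def GenPos (P : Set Pt) : Prop :=
  (∀ p ∈ P, ∀ q ∈ P, p ≠ q →
    p.2 ≠ q.2 ∧ q.2 - p.2 ≠ Real.sqrt 3 * (q.1 - p.1) ∧
      q.2 - p.2 ≠ -(Real.sqrt 3 * (q.1 - p.1))) ∧
  (∀ p ∈ P, ∀ q ∈ P, ∀ r ∈ P, p ≠ q → q ≠ r → p ≠ r → ¬ Collinear ℝ ({p, q, r} : Set Pt))

/-- `v` is, among the vertices visible from `u` in the positive subcone of `u` containing `v`,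
the one minimizing the projection onto the cone bisector: `u` adds the edge `uv`. -/
def EdgeDir (P : Set Pt) (S : Set (Pt × Pt)) (u v : Pt) : Prop :=
  u ∈ P ∧ v ∈ P ∧ ∃ i < 3, inPos i u v ∧ CanSee S u v ∧
    ∀ w ∈ P, w ≠ u → inPos i u w → CanSee S u w → SameSubPos S i u v w →
      projLen i u v ≤ projLen i u w

/-- Edges of the constrained half-θ₆-graph. -/
def HEdge (P : Set Pt) (S : Set (Pt × Pt)) (u v : Pt) : Prop :=
  EdgeDir P S u v ∨ EdgeDir P S v u

/-- `f` is a path in the graph with edge relation `E`. -/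
def IsPath (E : Pt → Pt → Prop) {n : ℕ} (f : Fin (n + 1) → Pt) : Prop :=
  ∀ j : Fin n, E (f j.castSucc) (f j.succ)

/-- Euclidean length of a polygonal path. -/
def pathLen {n : ℕ} (f : Fin (n + 1) → Pt) : ℝ :=
  ∑ j : Fin n, dst (f j.castSucc) (f j.succ)

/-- `x` is a vertex of the canonical sequence of `u` in the negative cone `C̄ᵘᵢ`. -/
def CanonVert (P : Set Pt) (S : Set (Pt × Pt)) (i : ℕ) (u x : Pt) : Prop :=
  x ∈ P ∧ HEdge P S u x ∧ inNeg i u x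

/-- `v` and `w` are consecutive (in counterclockwise order) vertices of the canonical path of
`u` in a subcone of the negative cone `C̄ᵘᵢ`. -/
def ConsecCanon (P : Set Pt) (S : Set (Pt × Pt)) (i : ℕ) (u v w : Pt) : Prop :=
  CanonVert P S i u v ∧ CanonVert P S i u w ∧ SameSubNeg S i u v w ∧
  crossP (v - u) (w - u) > 0 ∧
  ∀ x ∈ P, CanonVert P S i u x → SameSubNeg S i u v x →
    ¬ (crossP (v - u) (x - u) > 0 ∧ crossP (x - u) (w - u) > 0)

/-- `x` is a closest canonical vertex of `u` in (a subcone of) the negative cone `C̄ᵘᵢ`,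
distances being measured by projection onto the cone bisector. -/
def ClosestCanon (P : Set Pt) (S : Set (Pt × Pt)) (i : ℕ) (u x : Pt) : Prop :=
  CanonVert P S i u x ∧
  ∀ y ∈ P, CanonVert P S i u y → SameSubNeg S i u x y → negProj i u x ≤ negProj i u y

/-- Edges of the bounded-degree graph `G₉`: canonical-path edges together with, for each
negative subcone, the edge to the closest canonical vertex. -/
def G9Edge (P : Set Pt) (S : Set (Pt × Pt)) (a b : Pt) : Prop :=
  (∃ u ∈ P, ∃ i < 3, ConsecCanon P S i u a b ∨ ConsecCanon P S i u b a) ∨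
  (∃ i < 3, ClosestCanon P S i a b ∨ ClosestCanon P S i b a)

/-- Coordinate of `p` along the right boundary direction `(1/2, √3/2)` of the upward cone. -/
def coordA (p : Pt) : ℝ := p.1 + p.2 / Real.sqrt 3

/-- Coordinate of `p` along the left boundary direction `(-1/2, √3/2)` of the upward cone. -/
def coordB (p : Pt) : ℝ := -p.1 + p.2 / Real.sqrt 3

end CHT6

namespace CHT6

/-- Number of constraints incident to `v` lying in its positive cone `Cᵢ`. -/
def cPos (P : Set Pt) (S : Set (Pt × Pt)) (i : ℕ) (v : Pt) : ℕ :=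
  Set.ncard {z | z ∈ P ∧ Constr S v z ∧ inPos i v z}

/-- Number of constraints incident to `v` lying in its negative cone `C̄ᵢ`. -/
def cNeg (P : Set Pt) (S : Set (Pt × Pt)) (i : ℕ) (v : Pt) : ℕ :=
  Set.ncard {z | z ∈ P ∧ Constr S v z ∧ inNeg i v z}

/-- Total number of constraints incident to `v`. -/
def cAll (P : Set Pt) (S : Set (Pt × Pt)) (v : Pt) : ℕ :=
  Set.ncard {z | z ∈ P ∧ Constr S v z}

/-- Charge of the positive cone `Cᵥᵢ`: closest-canonical-vertex edges `u v` with `u ∈ Cᵥᵢ`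
(i.e. `v` closest canonical vertex of `u` in `C̄ᵘᵢ`), plus canonical-path edges `v w` of
canonical paths of vertices `u ∈ Cᵥᵢ` lying in one of the adjacent negative cones
`C̄ᵥ_{i±1}` of `v`. -/
noncomputable def chargePos (P : Set Pt) (S : Set (Pt × Pt)) (i : ℕ) (v : Pt) : ℕ :=
  Set.ncard ({u | u ∈ P ∧ ClosestCanon P S i u v} ∪
    {w | w ∈ P ∧ (∃ u ∈ P, ConsecCanon P S i u v w ∨ ConsecCanon P S i u w v) ∧
      (inNeg ((i + 1) % 3) v w ∨ inNeg ((i + 2) % 3) v w)})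

/-- Charge of the negative cone `C̄ᵥᵢ`: the edges to the closest canonical vertices in its
subcones, plus canonical-path edges `v w` (of paths of vertices `u ∈ Cᵥⱼ`, `j = i ± 1`)
lying in the adjacent positive cone `Cᵥ_{j∓1}` of `v`. -/
noncomputable def chargeNeg (P : Set Pt) (S : Set (Pt × Pt)) (i : ℕ) (v : Pt) : ℕ :=
  Set.ncard ({w | w ∈ P ∧ ClosestCanon P S i v w} ∪
    {w | w ∈ P ∧ ∃ u ∈ P,
      (((ConsecCanon P S ((i + 1) % 3) u v w ∨ ConsecCanon P S ((i + 1) % 3) u w v) ∧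
          inPos ((i + 2) % 3) v w) ∨
       ((ConsecCanon P S ((i + 2) % 3) u v w ∨ ConsecCanon P S ((i + 2) % 3) u w v) ∧
          inPos ((i + 1) % 3) v w))})


/-! ### Linear coordinates adapted to the cones -/

/-- The linear functional measuring the displacement along the bisector of the cone `Cᵢ`
(for `i < 3`). The three functionals add up to zero. -/
def hf : ℕ → Pt → ℝ
  | 0, p => p.2
  | 1, p => -(Real.sqrt 3 / 2) * p.1 - p.2 / 2
  | _, p => Real.sqrt 3 / 2 * p.1 - p.2 / 2

/-- `i, j, k` are the three cone indices `0, 1, 2`, in any order. -/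
def Tri (i j k : ℕ) : Prop := i < 3 ∧ j < 3 ∧ k < 3 ∧ i ≠ j ∧ j ≠ k ∧ i ≠ k

/-- `x = a + s (q - a) + t (p - a)`, in coordinates. -/
def Bar (a q p : Pt) (s t : ℝ) (x : Pt) : Prop :=
  x.1 = a.1 + s * (q.1 - a.1) + t * (p.1 - a.1) ∧
  x.2 = a.2 + s * (q.2 - a.2) + t * (p.2 - a.2)

/-- `x = a + s (b - a)`, in coordinates. -/
def On (a b : Pt) (s : ℝ) (x : Pt) : Prop :=
  x.1 = a.1 + s * (b.1 - a.1) ∧ x.2 = a.2 + s * (b.2 - a.2)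

/-- Twice the signed area of the triangle `abc`. -/
def dd (a b c : Pt) : ℝ := (b.1 - a.1) * (c.2 - a.2) - (b.2 - a.2) * (c.1 - a.1)

lemma crossP_eq (a b c : Pt) : crossP (b - a) (c - a) = dd a b c := by
  simp [crossP, dd]

lemma Tri.cases {i j k : ℕ} (h : Tri i j k) :
    (i = 0 ∧ j = 1 ∧ k = 2) ∨ (i = 0 ∧ j = 2 ∧ k = 1) ∨ (i = 1 ∧ j = 0 ∧ k = 2) ∨
    (i = 1 ∧ j = 2 ∧ k = 0) ∨ (i = 2 ∧ j = 0 ∧ k = 1) ∨ (i = 2 ∧ j = 1 ∧ k = 0) := by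
  unfold Tri at h; omega

lemma Tri.swap {i j k : ℕ} (h : Tri i j k) : Tri i k j := by unfold Tri at *; omega

lemma Tri.flip {i j k : ℕ} (h : Tri i j k) : Tri j i k := by unfold Tri at *; omega

lemma Tri.next {i : ℕ} (h : i < 3) : Tri i ((i + 1) % 3) ((i + 2) % 3) := by
  unfold Tri; omega

lemma Tri.exists {i : ℕ} (h : i < 3) : ∃ j k, Tri i j k := ⟨_, _, Tri.next h⟩

lemma hf_sum {i j k : ℕ} (h : Tri i j k) (p : Pt) : hf i p + hf j p + hf k p = 0 := by
  rcases h.cases with ⟨rfl, rfl, rfl⟩ | ⟨rfl, rfl, rfl⟩ | ⟨rfl, rfl, rfl⟩ | ⟨rfl, rfl, rfl⟩ |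
    ⟨rfl, rfl, rfl⟩ | ⟨rfl, rfl, rfl⟩ <;> simp only [hf] <;> ring

lemma Bar.hf {a q p x : Pt} {s t : ℝ} (h : Bar a q p s t x) (i : ℕ) :
    hf i x = hf i a + s * (hf i q - hf i a) + t * (hf i p - hf i a) := by
  obtain ⟨h1, h2⟩ := h
  rcases i with _ | _ | i <;> simp only [CHT6.hf, h1, h2] <;> ring

lemma On.hf {a b x : Pt} {s : ℝ} (h : On a b s x) (i : ℕ) :
    hf i x = hf i a + s * (hf i b - hf i a) := by
  obtain ⟨h1, h2⟩ := h
  rcases i with _ | _ | i <;> simp only [CHT6.hf, h1, h2] <;> ring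

lemma cos_third : Real.cos (2 * Real.pi / 3) = -1 / 2 := by
  have : 2 * Real.pi / 3 = Real.pi - Real.pi / 3 := by ring
  rw [this, Real.cos_pi_sub, Real.cos_pi_div_three]; norm_num

lemma sin_third : Real.sin (2 * Real.pi / 3) = Real.sqrt 3 / 2 := by
  have : 2 * Real.pi / 3 = Real.pi - Real.pi / 3 := by ring
  rw [this, Real.sin_pi_sub, Real.sin_pi_div_three]

lemma cos_third' : Real.cos (2 * Real.pi * 2 / 3) = -1 / 2 := by
  have : 2 * Real.pi * 2 / 3 = Real.pi / 3 + Real.pi := by ring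
  rw [this, Real.cos_add_pi, Real.cos_pi_div_three]; norm_num

lemma sin_third' : Real.sin (2 * Real.pi * 2 / 3) = -(Real.sqrt 3 / 2) := by
  have : 2 * Real.pi * 2 / 3 = Real.pi / 3 + Real.pi := by ring
  rw [this, Real.sin_add_pi, Real.sin_pi_div_three]

lemma rel_zero (u p : Pt) : rel 0 u p = (p.1 - u.1, p.2 - u.2) := by
  simp [rel, rot]

lemma rel_one (u p : Pt) : rel 1 u p =
    (-1 / 2 * (p.1 - u.1) + Real.sqrt 3 / 2 * (p.2 - u.2),
      -(Real.sqrt 3 / 2) * (p.1 - u.1) - 1 / 2 * (p.2 - u.2)) := by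
  simp only [rel, rot, Nat.cast_one, mul_one, Real.cos_neg, Real.sin_neg, cos_third, sin_third,
    Prod.fst_sub, Prod.snd_sub]
  ext <;> simp <;> ring

lemma rel_two (u p : Pt) : rel 2 u p =
    (-1 / 2 * (p.1 - u.1) - Real.sqrt 3 / 2 * (p.2 - u.2),
      Real.sqrt 3 / 2 * (p.1 - u.1) - 1 / 2 * (p.2 - u.2)) := by
  simp only [rel, rot, Nat.cast_ofNat, Real.cos_neg, Real.sin_neg, cos_third', sin_third',
    Prod.fst_sub, Prod.snd_sub]
  ext <;> simp <;> ring

lemma projLen_eq {i : ℕ} (hi : i < 3) (u p : Pt) : projLen i u p = hf i p - hf i u := by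
  interval_cases i <;> simp only [projLen, rel_zero, rel_one, rel_two, hf] <;> ring

/-- The positive cone `Cᵢ` is where the two other functionals are negative. -/
lemma inPos_iff {i j k : ℕ} (h : Tri i j k) (u p : Pt) :
    inPos i u p ↔ hf j p < hf j u ∧ hf k p < hf k u := by
  have hs : Real.sqrt 3 * Real.sqrt 3 = 3 := Real.mul_self_sqrt (by norm_num)
  have key : ∀ x y : ℝ, Real.sqrt 3 * |x| < y ↔ Real.sqrt 3 * x < y ∧ -(Real.sqrt 3 * x) < y := by
    intro x y
    rw [← abs_of_pos (Real.sqrt_pos.2 (show (0 : ℝ) < 3 by norm_num)), ← abs_mul, abs_lt,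
      abs_of_pos (Real.sqrt_pos.2 (show (0 : ℝ) < 3 by norm_num))]
    constructor <;> rintro ⟨h1, h2⟩ <;> constructor <;> linarith
  rcases h.cases with ⟨rfl, rfl, rfl⟩ | ⟨rfl, rfl, rfl⟩ | ⟨rfl, rfl, rfl⟩ | ⟨rfl, rfl, rfl⟩ |
    ⟨rfl, rfl, rfl⟩ | ⟨rfl, rfl, rfl⟩ <;>
    simp only [inPos, key, rel_zero, rel_one, rel_two, hf] <;>
    constructor <;> rintro ⟨h1, h2⟩ <;> constructor <;> nlinarith

lemma inPos_self {i j k : ℕ} (h : Tri i j k) {u p : Pt} (hp : inPos i u p) : hf i u < hf i p := by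
  have := (inPos_iff h u p).1 hp
  have h1 := hf_sum h u
  have h2 := hf_sum h p
  linarith

/-- The orientation determinant in the coordinates `(hf j, hf k)`, up to a constant factor. -/
lemma dd_hf {i j k : ℕ} (h : Tri i j k) : ∃ κ : ℝ, κ ≠ 0 ∧ ∀ a b c : Pt,
    κ * dd a b c = (hf j b - hf j a) * (hf k c - hf k a) - (hf k b - hf k a) * (hf j c - hf j a) := by
  have hs : Real.sqrt 3 / 2 ≠ 0 := by positivity
  rcases h.cases with ⟨rfl, rfl, rfl⟩ | ⟨rfl, rfl, rfl⟩ | ⟨rfl, rfl, rfl⟩ | ⟨rfl, rfl, rfl⟩ |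
    ⟨rfl, rfl, rfl⟩ | ⟨rfl, rfl, rfl⟩
  all_goals first
    | refine ⟨Real.sqrt 3 / 2, hs, fun a b c => ?_⟩
      simp only [hf, dd]
      ring1
    | refine ⟨-(Real.sqrt 3 / 2), neg_ne_zero.2 hs, fun a b c => ?_⟩
      simp only [hf, dd]
      ring1

lemma exists_bar {a q p : Pt} (h : dd a q p ≠ 0) (x : Pt) : ∃ s t, Bar a q p s t x := by
  refine ⟨dd a x p / dd a q p, dd a q x / dd a q p, ?_, ?_⟩ <;>
    field_simp <;> simp only [dd] <;> ring

lemma mem_openSegment {a b x : Pt} : x ∈ openSegment ℝ a b ↔ ∃ s, 0 < s ∧ s < 1 ∧ On a b s x := by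
  constructor
  · rintro ⟨α, β, h1, h2, h3, rfl⟩
    refine ⟨β, h2, by linarith, ?_, ?_⟩ <;>
      (obtain rfl : α = 1 - β := by linarith) <;> simp <;> ring
  · rintro ⟨s, h1, h2, h3, h4⟩
    refine ⟨1 - s, s, by linarith, h1, by ring, ?_⟩
    ext
    · simp [h3]; ring
    · simp [h4]; ring

lemma dd_bar {a q p x y : Pt} {s t s' t' : ℝ} (hx : Bar a q p s t x) (hy : Bar a q p s' t' y) :
    dd a x y = (s * t' - t * s') * dd a q p := by
  obtain ⟨h1, h2⟩ := hx
  obtain ⟨h3, h4⟩ := hy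
  simp only [dd, h1, h2, h3, h4]; ring

/-! ### General position -/

/-- The hypotheses on the point set `P` and the constraint set `S`. -/
structure Setup (P : Set Pt) (S : Set (Pt × Pt)) : Prop where
  fin : P.Finite
  mem : ∀ c ∈ S, c.1 ∈ P ∧ c.2 ∈ P
  nc : ∀ c ∈ S, ∀ d ∈ S, c ≠ d → ¬ PCross c.1 c.2 d.1 d.2
  gp : GenPos P

lemma Constr.symm {S : Set (Pt × Pt)} {u v : Pt} (h : Constr S u v) : Constr S v u := Or.symm h

lemma PCross_symm_left {a b c d : Pt} (h : PCross a b c d) : PCross b a c d := by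
  unfold PCross at *; rwa [openSegment_symm]

lemma PCross_symm_right {a b c d : Pt} (h : PCross a b c d) : PCross a b d c := by
  unfold PCross at *; rwa [openSegment_symm ℝ d c]

lemma CanSee.symm {S : Set (Pt × Pt)} {u v : Pt} (h : CanSee S u v) : CanSee S v u := by
  rcases h with h | h
  · exact Or.inl h.symm
  · exact Or.inr fun c hc hx => h c hc (PCross_symm_right hx)

section

variable {P : Set Pt} {S : Set (Pt × Pt)}

lemma Setup.constr_mem (h : Setup P S) {u v : Pt} (hc : Constr S u v) : u ∈ P ∧ v ∈ P := by
  rcases hc with hc | hc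
  · exact h.mem _ hc
  · exact (h.mem _ hc).symm

lemma collinear_of_dd {a b c : Pt} (hab : a ≠ b) (h : dd a b c = 0) :
    Collinear ℝ ({a, b, c} : Set Pt) := by
  rw [collinear_iff_of_mem (p₀ := a) (by simp)]
  have : ∃ r : ℝ, On a b r c := by
    by_cases h1 : b.1 - a.1 = 0
    · have h2 : b.2 - a.2 ≠ 0 := by
        intro h2; apply hab; ext <;> linarith
      refine ⟨(c.2 - a.2) / (b.2 - a.2), ?_, ?_⟩
      · simp only [dd, h1] at h
        have : c.1 - a.1 = 0 := by
          have : (b.2 - a.2) * (c.1 - a.1) = 0 := by linarith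
          exact (mul_eq_zero.1 this).resolve_left h2
        rw [h1]; linarith
      · field_simp; ring
    · refine ⟨(c.1 - a.1) / (b.1 - a.1), ?_, ?_⟩
      · field_simp; ring
      · field_simp
        simp only [dd] at h
        linarith
  obtain ⟨r, h1, h2⟩ := this
  refine ⟨b - a, ?_⟩
  rintro p (rfl | rfl | rfl)
  · exact ⟨0, by simp⟩
  · exact ⟨1, by simp⟩
  · refine ⟨r, ?_⟩
    ext <;> simp [h1, h2] <;> ring

lemma Setup.dd_ne (h : Setup P S) {a b c : Pt} (ha : a ∈ P) (hb : b ∈ P) (hc : c ∈ P)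
    (hab : a ≠ b) (hbc : b ≠ c) (hac : a ≠ c) : dd a b c ≠ 0 := fun h0 =>
  h.gp.2 a ha b hb c hc hab hbc hac (collinear_of_dd hab h0)

lemma Setup.hf_inj (h : Setup P S) {i : ℕ} {a b : Pt} (ha : a ∈ P) (hb : b ∈ P)
    (hab : hf i a = hf i b) : a = b := by
  by_contra hne
  obtain ⟨h1, h2, h3⟩ := h.gp.1 a ha b hb hne
  rcases i with _ | _ | i <;> simp only [hf] at hab
  · exact h1 hab
  · exact h3 (by linarith)
  · exact h2 (by linarith)

/-- An interior point of a segment spanned by `P` is not a point of `P`. -/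
lemma Setup.not_on (h : Setup P S) {a b c : Pt} (ha : a ∈ P) (hb : b ∈ P) (hc : c ∈ P)
    (hab : a ≠ b) {s : ℝ} (h0 : 0 < s) (h1 : s < 1) (hs : On a b s c) : False := by
  obtain ⟨h2, h3⟩ := hs
  have hd : dd a b c = 0 := by simp only [dd, h2, h3]; ring
  have hca : a ≠ c := by
    rintro rfl
    apply hab
    ext
    · have : s * (b.1 - a.1) = 0 := by linarith
      rcases mul_eq_zero.1 this with h | h <;> linarith
    · have : s * (b.2 - a.2) = 0 := by linarith
      rcases mul_eq_zero.1 this with h | h <;> linarith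
  have hcb : b ≠ c := by
    rintro rfl
    apply hab
    ext
    · have : (1 - s) * (b.1 - a.1) = 0 := by linarith
      rcases mul_eq_zero.1 this with h | h <;> linarith
    · have : (1 - s) * (b.2 - a.2) = 0 := by linarith
      rcases mul_eq_zero.1 this with h | h <;> linarith
  exact h.dd_ne ha hb hc hab hcb hca hd

/-- A constraint `cd` cannot meet, in an endpoint or an interior point, the interior of a
segment `gb` between mutually visible points, unless it lies on the line `gb`. -/
lemma Setup.clear (h : Setup P S) {g b c d m e : Pt} (hg : g ∈ P) (hb : b ∈ P) (hgb : g ≠ b)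
    (hv : CanSee S g b) (hcd : Constr S c d) {σ τ ρ : ℝ} (hσ : 0 ≤ σ) (hσ1 : σ < 1)
    (he : On c d σ e) (hτ : 0 < τ) (hτ1 : τ < 1) (he' : On g b τ e)
    (hm : On c d ρ m) (hmg : dd g b m ≠ 0) : False := by
  rcases hσ.eq_or_lt with rfl | hσ
  · obtain rfl : e = c := by ext <;> simp [he.1, he.2]
    exact h.not_on hg hb (h.constr_mem hcd).1 hgb hτ hτ1 he'
  have hx : PCross c d g b :=
    ⟨e, mem_openSegment.2 ⟨σ, hσ, hσ1, he⟩, mem_openSegment.2 ⟨τ, hτ, hτ1, he'⟩⟩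
  rcases hv with hv | hv
  · have key : ∀ x y : Pt × Pt, x ∈ S → y ∈ S → PCross x.1 x.2 y.1 y.2 → x = y := by
      intro x y h1 h2 h3
      by_contra hne
      exact h.nc x h1 y h2 hne h3
    have : (c = g ∧ d = b) ∨ (c = b ∧ d = g) := by
      rcases hcd with hcd | hcd <;> rcases hv with hv | hv
      · have := key _ _ hcd hv hx
        simp only [Prod.mk.injEq] at this; tauto
      · have := key _ _ hcd hv (PCross_symm_right hx)
        simp only [Prod.mk.injEq] at this; tauto
      · have := key _ _ hcd hv (PCross_symm_left hx)
        simp only [Prod.mk.injEq] at this; tauto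
      · have := key _ _ hcd hv (PCross_symm_left (PCross_symm_right hx))
        simp only [Prod.mk.injEq] at this; tauto
    apply hmg
    obtain ⟨h1, h2⟩ := hm
    rcases this with ⟨rfl, rfl⟩ | ⟨rfl, rfl⟩ <;> simp only [dd, h1, h2] <;> ring
  · rcases hcd with hcd | hcd
    · exact hv _ hcd hx
    · exact hv _ hcd (PCross_symm_left hx)

/-! ### Visible vertices inside a triangle -/

/-- Two affine functions along a segment, positive at its start and not both positive at its
end: at the first time where one of them vanishes the other one is still nonnegative. -/
lemma exit_real {α β α' β' : ℝ} (h1 : 0 < α) (h2 : 0 < β) (h3 : ¬ (0 < α' ∧ 0 < β')) :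
    ∃ l : ℝ, 0 < l ∧ l ≤ 1 ∧ ((α + l * (α' - α) = 0 ∧ 0 ≤ β + l * (β' - β)) ∨
      (β + l * (β' - β) = 0 ∧ 0 ≤ α + l * (α' - α))) := by
  have one : ∀ x y : ℝ, 0 < x → y ≤ 0 →
      0 < x / (x - y) ∧ x / (x - y) ≤ 1 ∧ x + x / (x - y) * (y - x) = 0 := by
    intro x y hx hy
    have : 0 < x - y := by linarith
    refine ⟨by positivity, by rw [div_le_one this]; linarith, by field_simp; ring⟩
  by_cases ha : 0 < α'
  · have hb : β' ≤ 0 := by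
      by_contra hb
      exact h3 ⟨ha, not_le.1 hb⟩
    obtain ⟨g1, g2, g3⟩ := one β β' h2 hb
    exact ⟨_, g1, g2, Or.inr ⟨g3, by nlinarith⟩⟩
  · obtain ⟨g1, g2, g3⟩ := one α α' h1 (not_lt.1 ha)
    by_cases hb : 0 < β'
    · exact ⟨_, g1, g2, Or.inl ⟨g3, by nlinarith⟩⟩
    · obtain ⟨k1, k2, k3⟩ := one β β' h2 (not_lt.1 hb)
      rcases le_total (α / (α - α')) (β / (β - β')) with hle | hle
      · exact ⟨_, g1, g2, Or.inl ⟨g3, by nlinarith⟩⟩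
      · exact ⟨_, k1, k2, Or.inr ⟨k3, by nlinarith⟩⟩

lemma Bar.unique {a q p x : Pt} {s t s' t' : ℝ} (hD : dd a q p ≠ 0) (h : Bar a q p s t x)
    (h' : Bar a q p s' t' x) : s = s' ∧ t = t' := by
  obtain ⟨h1, h2⟩ := h
  obtain ⟨h3, h4⟩ := h'
  constructor
  · have : (s - s') * dd a q p = 0 := by
      simp only [dd]
      linear_combination (p.2 - a.2) * (h3 - h1) - (p.1 - a.1) * (h4 - h2)
    rcases mul_eq_zero.1 this with h | h
    · linarith
    · exact absurd h hD
  · have : (t - t') * dd a q p = 0 := by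
      simp only [dd]
      linear_combination (q.1 - a.1) * (h4 - h2) - (q.2 - a.2) * (h3 - h1)
    rcases mul_eq_zero.1 this with h | h
    · linarith
    · exact absurd h hD

lemma Bar.on {a q p c d m : Pt} {s t s' t' ρ : ℝ} (hc : Bar a q p s t c) (hd : Bar a q p s' t' d)
    (hm : On c d ρ m) : Bar a q p (s + ρ * (s' - s)) (t + ρ * (t' - t)) m := by
  obtain ⟨h1, h2⟩ := hc
  obtain ⟨h3, h4⟩ := hd
  obtain ⟨h5, h6⟩ := hm
  constructor
  · rw [h5, h3, h1]; ring
  · rw [h6, h4, h2]; ring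

lemma Bar.base (a q p : Pt) : Bar a q p 0 0 a := by constructor <;> ring
lemma Bar.left (a q p : Pt) : Bar a q p 1 0 q := by constructor <;> ring
lemma Bar.right (a q p : Pt) : Bar a q p 0 1 p := by constructor <;> ring

lemma On.symm {c d m : Pt} {ρ : ℝ} (h : On c d ρ m) : On d c (1 - ρ) m := by
  obtain ⟨h1, h2⟩ := h
  constructor
  · rw [h1]; ring
  · rw [h2]; ring

/-- The point at parameter `s` of the segment `ab`. -/
def pt (a b : Pt) (s : ℝ) : Pt := (a.1 + s * (b.1 - a.1), a.2 + s * (b.2 - a.2))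

lemma on_pt (a b : Pt) (s : ℝ) : On a b s (pt a b s) := ⟨rfl, rfl⟩

/-- No constraint that passes through the interior of the triangle `aqp` or of its side `ap` meets
the two sides `aq`, `qp` (without the corners `a` and `p`), not even in an endpoint. -/
def Guard (S : Set (Pt × Pt)) (a q p : Pt) : Prop :=
  ∀ c d m e σ ρ s t, Constr S c d → 0 < ρ → ρ < 1 → On c d ρ m → Bar a q p s t m →
    0 ≤ s → 0 < t → s + t < 1 → 0 ≤ σ → σ < 1 → On c d σ e →
    (∃ τ, 0 < τ ∧ τ < 1 ∧ On a q τ e) ∨ e = q ∨ (∃ τ, 0 < τ ∧ τ < 1 ∧ On q p τ e) → False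

/-- If no constraint enters the triangle `aqp` through its sides `aq` and `qp`, then `a` sees a
vertex `r` of that triangle which is not separated from `q` by a constraint at `a`. The vertex
forming the smallest positive angle with `aq` does it: a constraint blocking it would have an
endpoint in the triangle at a smaller angle. -/
lemma Setup.vis (h : Setup P S) {a q p : Pt} (ha : a ∈ P) (hp : p ∈ P) (hD : dd a q p ≠ 0)
    (Hs : Guard S a q p) :
    ∃ r ∈ P, ∃ s t, Bar a q p s t r ∧ 0 ≤ s ∧ 0 < t ∧ s + t ≤ 1 ∧ CanSee S a r ∧
      ∀ z s' t', Constr S a z → Bar a q p s' t' z → 0 < t' → s * t' < t * s' → False := by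
  obtain ⟨r, hr, s, t, hb, hs, ht, hst, hmax⟩ : ∃ r ∈ P, ∃ s t, Bar a q p s t r ∧ 0 ≤ s ∧ 0 < t ∧
      s + t ≤ 1 ∧ ∀ r' ∈ P, ∀ s' t', Bar a q p s' t' r' → 0 ≤ s' → 0 < t' → s' + t' ≤ 1 →
        s' * t ≤ s * t' := by
    let R : Set Pt := {r | r ∈ P ∧ ∃ s t, Bar a q p s t r ∧ 0 ≤ s ∧ 0 < t ∧ s + t ≤ 1}
    have hR : R.Finite := h.fin.subset fun r hr => hr.1
    obtain ⟨r, ⟨hr, s, t, hb, hs, ht, hst⟩, hmax⟩ :=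
      Set.exists_max_image R (fun r => dd a r p / dd a q r) hR
        ⟨p, hp, 0, 1, Bar.right a q p, le_refl _, one_pos, by norm_num⟩
    refine ⟨r, hr, s, t, hb, hs, ht, hst, fun r' hr' s' t' hb' hs' ht' hst' => ?_⟩
    have h1 := hmax r' ⟨hr', s', t', hb', hs', ht', hst'⟩
    simp only [dd_bar hb (Bar.right a q p), dd_bar hb' (Bar.right a q p),
      dd_bar (Bar.left a q p) hb, dd_bar (Bar.left a q p) hb'] at h1
    have e1 : (s' * 1 - t' * 0) * dd a q p / ((1 * t' - 0 * s') * dd a q p) = s' / t' := by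
      rw [mul_div_mul_right _ _ hD]; simp
    have e2 : (s * 1 - t * 0) * dd a q p / ((1 * t - 0 * s) * dd a q p) = s / t := by
      rw [mul_div_mul_right _ _ hD]; simp
    rw [e1, e2, div_le_div_iff₀ ht' ht] at h1
    exact h1
  have har : a ≠ r := by
    rintro rfl
    have := (hb.unique hD (Bar.base a q p)).2
    linarith
  refine ⟨r, hr, s, t, hb, hs, ht, hst, ?_, ?_⟩
  · by_contra hcs
    have key : ∀ c d m ρ μ s' t', Constr S c d → 0 < ρ → ρ < 1 → On c d ρ m → 0 < μ → μ < 1 →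
        On a r μ m → Bar a q p s' t' c → s * t' < t * s' → False := by
      intro c d m ρ μ s' t' hcd hρ hρ1 hm hμ hμ1 hm' hc hX
      have hbm := (Bar.base a q p).on hb hm'
      simp only [zero_add, sub_zero] at hbm
      have hμt : 0 < μ * t := by positivity
      have hμs : 0 ≤ μ * s := by positivity
      have hμst : μ * s + μ * t < 1 := by nlinarith
      by_cases hin : 0 < t' ∧ 0 < 1 - s' - t'
      · have hs' : 0 < s' := by
          have : 0 ≤ s * t' := mul_nonneg hs hin.1.le
          by_contra hneg
          nlinarith
        have := hmax c (h.constr_mem hcd).1 s' t' hc hs'.le hin.1 (by linarith)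
        linarith
      · obtain ⟨l, hl, hl1, hex⟩ := exit_real hμt (show 0 < 1 - μ * s - μ * t by linarith) hin
        let e := pt m c l
        have hbe := hbm.on hc (on_pt m c l)
        have hoe : On c d ((1 - l) * ρ) e := by
          obtain ⟨g1, g2⟩ := hm
          constructor
          · simp only [e, pt, g1]; ring
          · simp only [e, pt, g2]; ring
        have hσ0 : 0 ≤ (1 - l) * ρ := mul_nonneg (by linarith) hρ.le
        have hσ1 : (1 - l) * ρ < 1 := by nlinarith
        set se := μ * s + l * (s' - μ * s) with hse
        set te := μ * t + l * (t' - μ * t) with hte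
        have hXe : s * te < t * se := by
          have : t * se - s * te = l * (t * s' - s * t') := by rw [hse, hte]; ring
          nlinarith
        refine Hs c d m e _ ρ _ _ hcd hρ hρ1 hm hbm hμs hμt hμst hσ0 hσ1 hoe ?_
        rcases hex with ⟨e1, e2⟩ | ⟨e1, e2⟩
        · have hle : se ≤ 1 := by
            have : 1 - μ * s - μ * t + l * (1 - s' - t' - (1 - μ * s - μ * t)) = 1 - se - te := by
              rw [hse, hte]; ring
            linarith
          rw [e1] at hXe hbe
          have hse0 : 0 < se := by
            by_contra hneg
            nlinarith
          rcases hle.eq_or_lt with h1 | h1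
          · right; left
            rw [h1] at hbe
            ext
            · rw [hbe.1]; ring
            · rw [hbe.2]; ring
          · left
            refine ⟨se, hse0, h1, ?_, ?_⟩
            · rw [hbe.1]; ring
            · rw [hbe.2]; ring
        · have hsum : se = 1 - te := by
            have : 1 - μ * s - μ * t + l * (1 - s' - t' - (1 - μ * s - μ * t)) = 1 - se - te := by
              rw [hse, hte]; ring
            linarith
          have hse0 : 0 < se := by
            have : 0 ≤ s * te := mul_nonneg hs e2
            by_contra hneg
            nlinarith
          rcases e2.eq_or_lt with h1 | h1
          · right; left
            rw [hsum, ← h1] at hbe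
            ext
            · rw [hbe.1]; ring
            · rw [hbe.2]; ring
          · right; right
            rw [hsum] at hbe
            refine ⟨te, h1, by linarith, ?_, ?_⟩
            · rw [hbe.1]; ring
            · rw [hbe.2]; ring
    simp only [CanSee, not_or, not_forall, not_not] at hcs
    obtain ⟨hnc, ⟨c, d⟩, hcS, m, hm1, hm2⟩ := hcs
    obtain ⟨ρ, hρ, hρ1, hmc⟩ := mem_openSegment.1 hm1
    obtain ⟨μ, hμ, hμ1, hma⟩ := mem_openSegment.1 hm2
    have hcd : Constr S c d := Or.inl hcS
    obtain ⟨s1, t1, hb1⟩ := exists_bar hD c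
    obtain ⟨s2, t2, hb2⟩ := exists_bar hD d
    have hbm := (Bar.base a q p).on hb hma
    simp only [zero_add, sub_zero] at hbm
    obtain ⟨u1, u2⟩ := hbm.unique hD (hb1.on hb2 hmc)
    have hX : (1 - ρ) * (s * t1 - t * s1) + ρ * (s * t2 - t * s2) = 0 := by
      linear_combination t * u1 - s * u2
    by_cases c1 : s * t1 < t * s1
    · exact key c d m ρ μ s1 t1 hcd hρ hρ1 hmc hμ hμ1 hma hb1 c1
    by_cases c2 : s * t2 < t * s2
    · exact key d c m (1 - ρ) μ s2 t2 hcd.symm (by linarith) (by linarith) hmc.symm hμ hμ1 hma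
        hb2 c2
    have z1 : s * t1 - t * s1 = 0 := by nlinarith
    have z2 : s * t2 - t * s2 = 0 := by nlinarith
    have fact : ∀ x ∈ P, ∀ s' t', Bar a q p s' t' x → s * t' - t * s' = 0 → x = a ∨ x = r := by
      intro x hx s' t' hbx hz
      by_contra hne
      push Not at hne
      refine h.dd_ne ha hr hx har hne.2.symm hne.1.symm ?_
      rw [dd_bar hb hbx, hz, zero_mul]
    have hbad : ∀ y : Pt, y = a ∨ y = r → On y y ρ m → False := by
      rintro y hy ⟨g1, g2⟩
      have hmy : m = y := by ext <;> [rw [g1]; rw [g2]] <;> ring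
      have hmP : m ∈ P := by rcases hy with rfl | rfl <;> rw [hmy] <;> assumption
      exact h.not_on ha hr hmP har hμ hμ1 hma
    rcases fact c (h.constr_mem hcd).1 _ _ hb1 z1 with rfl | rfl <;>
      rcases fact d (h.constr_mem hcd).2 _ _ hb2 z2 with rfl | rfl
    · exact hbad _ (Or.inl rfl) hmc
    · exact hnc hcd
    · exact hnc hcd.symm
    · exact hbad _ (Or.inr rfl) hmc
  · intro z s' t' hz hbz ht' hlt
    have hs' : 0 < s' := by
      have : 0 ≤ s * t' := mul_nonneg hs ht'.le
      by_contra hneg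
      nlinarith
    by_cases hin : s' + t' ≤ 1
    · have := hmax z (h.constr_mem hz).2 s' t' hbz hs'.le ht' hin
      linarith
    · push Not at hin
      have hpos : 0 < s' + t' := by linarith
      have hinv : 1 / (s' + t') < 1 := by rw [div_lt_one hpos]; exact hin
      have hinv0 : 0 < 1 / (s' + t') := by positivity
      have hbb := (Bar.base a q p).on hbz (on_pt a z (1 / (2 * (s' + t'))))
      simp only [zero_add, sub_zero] at hbb
      have hbe := (Bar.base a q p).on hbz (on_pt a z (1 / (s' + t')))
      simp only [zero_add, sub_zero] at hbe
      have hhalf : 1 / (2 * (s' + t')) = (1 / (s' + t')) / 2 := by field_simp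
      refine Hs z a _ (pt a z (1 / (s' + t'))) (1 - 1 / (s' + t')) (1 - 1 / (2 * (s' + t'))) _ _
        hz.symm (by linarith) (by rw [hhalf]; linarith) (on_pt _ _ _).symm hbb (by positivity)
        (by positivity) (by field_simp; linarith) (by linarith) (by linarith) (on_pt _ _ _).symm
        (Or.inr (Or.inr ⟨t' / (s' + t'), by positivity, ?_, ?_⟩))
      · rw [div_lt_one hpos]; linarith
      · constructor
        · rw [hbe.1]; field_simp; ring
        · rw [hbe.2]; field_simp; ring

/-! ### Edges of the half-θ₆-graph -/

/-- `u` adds the edge `uv`, where `v` lies in the cone `Cᵢ` of `u`. -/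
def EdgeI (P : Set Pt) (S : Set (Pt × Pt)) (i : ℕ) (u v : Pt) : Prop :=
  u ∈ P ∧ v ∈ P ∧ inPos i u v ∧ CanSee S u v ∧
    ∀ w ∈ P, w ≠ u → inPos i u w → CanSee S u w → SameSubPos S i u v w →
      projLen i u v ≤ projLen i u w

lemma EdgeI.ne {i j k : ℕ} (hT : Tri i j k) {u v : Pt} (h : EdgeI P S i u v) : u ≠ v := by
  rintro rfl
  exact lt_irrefl _ (inPos_self hT h.2.2.1)

lemma inPos_unique {i i' : ℕ} (hi : i < 3) (hi' : i' < 3) {u v : Pt} (h : inPos i u v)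
    (h' : inPos i' u v) : i = i' := by
  by_contra hne
  obtain ⟨k, hT⟩ : ∃ k, Tri i i' k := by
    refine ⟨3 - i - i', ?_⟩
    unfold Tri; omega
  have h1 := (inPos_iff hT u v).1 h
  have h2 := inPos_self hT.flip h'
  linarith

lemma inPos_not_rev {i i' : ℕ} (hi : i < 3) (hi' : i' < 3) {u v : Pt} (h : inPos i u v)
    (h' : inPos i' v u) : False := by
  by_cases hne : i = i'
  · subst hne
    obtain ⟨j, k, hT⟩ := Tri.exists hi
    exact lt_asymm (inPos_self hT h) (inPos_self hT h')
  · obtain ⟨k, hT⟩ : ∃ k, Tri i i' k := by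
      refine ⟨3 - i - i', ?_⟩
      unfold Tri; omega
    have h1 := (inPos_iff hT u v).1 h
    have h2 := (inPos_iff hT.flip v u).1 h'
    linarith

lemma CanonVert.edge {i : ℕ} (hi : i < 3) {u x : Pt} (h : CanonVert P S i u x) :
    EdgeI P S i x u := by
  obtain ⟨hx, he, hn⟩ := h
  rcases he with ⟨h1, h2, i', hi', h3, h4⟩ | ⟨h1, h2, i', hi', h3, h4⟩
  · exact (inPos_not_rev hi hi' hn h3).elim
  · obtain rfl := inPos_unique hi hi' hn h3
    exact ⟨h1, h2, h3, h4⟩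

lemma EdgeI.canon {i : ℕ} (hi : i < 3) {u x : Pt} (h : EdgeI P S i x u) :
    CanonVert P S i u x :=
  ⟨h.1, Or.inr ⟨h.1, h.2.1, i, hi, h.2.2.1, h.2.2.2⟩, h.2.2.1⟩

/-- Two edges leaving `v` through a common subcone coincide. -/
lemma Setup.edge_unique (h : Setup P S) {i j k : ℕ} (hT : Tri i j k) {v u u' : Pt}
    (hu : EdgeI P S i v u) (hu' : EdgeI P S i v u') (hs : SameSubPos S i v u u') : u = u' := by
  have h1 := hu.2.2.2.2 u' hu'.2.1 (hu'.ne hT).symm hu'.2.2.1 hu'.2.2.2.1 hs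
  have h2 := hu'.2.2.2.2 u hu.2.1 (hu.ne hT).symm hu.2.2.1 hu.2.2.2.1 fun z h1 h2 h3 =>
    hs z h1 h2 (by rwa [mul_comm])
  rw [projLen_eq hT.1, projLen_eq hT.1] at h1 h2
  exact h.hf_inj hu.2.1 hu'.2.1 (le_antisymm (by linarith) (by linarith))

/-- If `a` adds the edge `ab` and the triangle `aqp` (with `q` on `ab`) is guarded, then `p` is
not a vertex of the cone that is closer to `a` than `b`. -/
lemma Setup.no_closer (h : Setup P S) {i j k : ℕ} (hT : Tri i j k) {a b q p : Pt} {τ : ℝ}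
    (hab : EdgeI P S i a b) (hp : p ∈ P) (hτ : 0 < τ) (hτ1 : τ ≤ 1) (hq : On a b τ q)
    (hD : dd a q p ≠ 0) (Hs : Guard S a q p) (hpa : inPos i a p) (hlt : hf i p < hf i b) :
    False := by
  obtain ⟨r, hr, s, t, hb, hs, ht, hst, hv, hsep⟩ := h.vis hab.1 hp hD Hs
  have ipb := (inPos_iff hT a b).1 hab.2.2.1
  have ipp := (inPos_iff hT a p).1 hpa
  have hib := inPos_self hT hab.2.2.1
  have qi := hq.hf i
  have qj : hf j q < hf j a := by rw [hq.hf j]; nlinarith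
  have qk : hf k q < hf k a := by rw [hq.hf k]; nlinarith
  have ri := hb.hf i
  have rj := hb.hf j
  have rk := hb.hf k
  have hra : inPos i a r := by
    rw [inPos_iff hT]
    constructor
    · nlinarith
    · nlinarith
  have hne : r ≠ a := by
    rintro rfl
    exact lt_irrefl _ (inPos_self hT hra)
  have hmin := hab.2.2.2.2 r hr hne hra hv ?_
  · rw [projLen_eq hT.1, projLen_eq hT.1, ri, qi] at hmin
    have h1 : s * (hf i a + τ * (hf i b - hf i a) - hf i a) ≤ s * (hf i b - hf i a) := by
      apply mul_le_mul_of_nonneg_left _ hs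
      nlinarith
    have h2 : t * (hf i p - hf i a) < t * (hf i b - hf i a) :=
      mul_lt_mul_of_pos_left (by linarith) ht
    have h3 : (s + t) * (hf i b - hf i a) ≤ 1 * (hf i b - hf i a) :=
      mul_le_mul_of_nonneg_right hst (by linarith)
    linarith
  · intro z hz hzc hcr
    rw [crossP_eq, crossP_eq] at hcr
    obtain ⟨s', t', hbz⟩ := exists_bar hD z
    have hbb : Bar a q p (1 / τ) 0 b := by
      constructor
      · rw [hq.1]; field_simp; ring
      · rw [hq.2]; field_simp; ring
    rw [dd_bar hbz hbb, dd_bar hbz hb] at hcr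
    have hD2 : 0 < dd a q p ^ 2 := by positivity
    have e : (s' * 0 - t' * (1 / τ)) * dd a q p * ((s' * t - t' * s) * dd a q p) =
        -(t' * (s' * t - t' * s)) * (dd a q p ^ 2 / τ) := by field_simp; ring
    rw [e] at hcr
    have hpos : 0 < t' * (s' * t - t' * s) := by
      by_contra hneg
      have : 0 ≤ -(t' * (s' * t - t' * s)) * (dd a q p ^ 2 / τ) :=
        mul_nonneg (by linarith) (by positivity)
      linarith
    rcases pos_and_pos_or_neg_and_neg_of_mul_pos hpos with ⟨g1, g2⟩ | ⟨g1, g2⟩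
    · exact hsep z s' t' hz hbz g1 (by linarith)
    · have hs' : s' ≤ 0 := by
        by_contra hneg
        push Not at hneg
        have := mul_pos hneg ht
        have := mul_nonneg (neg_nonneg.2 g1.le) hs
        linarith
      have hzj := ((inPos_iff hT a z).1 hzc).1
      rw [hbz.hf j] at hzj
      have k1 : 0 ≤ s' * (hf j q - hf j a) := mul_nonneg_of_nonpos_of_nonpos hs' (by linarith)
      have k2 : 0 ≤ t' * (hf j p - hf j a) :=
        mul_nonneg_of_nonpos_of_nonpos g1.le (by linarith)
      linarith

/-- An edge `ab` crossed by a segment between mutually visible points `g`, `p`: the endpoint `p`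
is not a vertex of the cone of `a` closer than `b`. -/
lemma Setup.cross_closer (h : Setup P S) {i j k : ℕ} (hT : Tri i j k) {a b g p q : Pt} {τ μ : ℝ}
    (hab : EdgeI P S i a b) (hg : g ∈ P) (hp : p ∈ P) (hgp : g ≠ p) (hv : CanSee S g p)
    (hτ : 0 < τ) (hτ1 : τ < 1) (hq : On a b τ q) (hμ : 0 < μ) (hμ1 : μ < 1) (hq' : On g p μ q)
    (hpa : inPos i a p) (hlt : hf i p < hf i b) : False := by
  have hab' := hab.ne hT
  have hap : a ≠ p := by
    rintro rfl
    exact lt_irrefl _ (inPos_self hT hpa)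
  have hbp : b ≠ p := by
    rintro rfl
    exact lt_irrefl _ hlt
  have hD0 := h.dd_ne hab.1 hab.2.1 hp hab' hbp hap
  have e1 : dd a q p = τ * dd a b p := by
    simp only [dd, hq.1, hq.2]; ring
  have hD : dd a q p ≠ 0 := by
    rw [e1]; exact mul_ne_zero hτ.ne' hD0
  refine h.no_closer hT hab hp hτ hτ1.le hq hD ?_ hpa hlt
  intro c d m e σ ρ s t hcd hρ hρ1 hm hbm hs ht hst hσ hσ1 he hor
  have hma : dd a b m ≠ 0 := by
    have : τ * dd a b m = t * dd a q p := by
      have h1 := dd_bar (Bar.left a q p) hbm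
      have h2 : dd a q m = τ * dd a b m := by simp only [dd, hq.1, hq.2]; ring
      rw [← h2, h1]; ring
    intro h0
    rw [h0, mul_zero] at this
    exact (mul_ne_zero ht.ne' hD) this.symm
  have hmg : dd g p m ≠ 0 := by
    have h1 : (1 - μ) * dd g p m = (1 - s - t) * dd a q p := by
      have g1 : (1 - μ) * g.1 = q.1 - μ * p.1 := by rw [hq'.1]; ring
      have g2 : (1 - μ) * g.2 = q.2 - μ * p.2 := by rw [hq'.2]; ring
      have : (1 - μ) * dd g p m = dd q p m := by
        simp only [dd]
        linear_combination (p.2 - m.2) * g1 - (p.1 - m.1) * g2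
      rw [this]
      simp only [dd, hbm.1, hbm.2]; ring
    intro h0
    rw [h0, mul_zero] at h1
    have : (1 - s - t) * dd a q p ≠ 0 := mul_ne_zero (by linarith) hD
    apply this
    linarith
  rcases hor with ⟨ν, hν, hν1, hνe⟩ | rfl | ⟨ν, hν, hν1, hνe⟩
  · refine h.clear hab.1 hab.2.1 hab' hab.2.2.2.1 hcd hσ hσ1 he (mul_pos hν hτ) (by nlinarith)
      ?_ hm hma
    constructor
    · rw [hνe.1, hq.1]; ring
    · rw [hνe.2, hq.2]; ring
  · exact h.clear hab.1 hab.2.1 hab' hab.2.2.2.1 hcd hσ hσ1 he hτ hτ1 hq hm hma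
  · refine h.clear (τ := μ + ν * (1 - μ)) hg hp hgp hv hcd hσ hσ1 he (by nlinarith)
      (by nlinarith) ?_ hm hmg
    constructor
    · rw [hνe.1, hq'.1]; ring
    · rw [hνe.2, hq'.2]; ring

/-- Edges of cones with different indices do not cross. -/
lemma Setup.planar (h : Setup P S) {i j k : ℕ} (hT : Tri i j k) {a b c d q : Pt} {τ μ : ℝ}
    (hab : EdgeI P S i a b) (hcd : EdgeI P S j c d)
    (hτ : 0 < τ) (hτ1 : τ < 1) (hq : On a b τ q) (hμ : 0 < μ) (hμ1 : μ < 1) (hq' : On c d μ q) :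
    False := by
  wlog hk : hf k q - hf k a ≤ hf k q - hf k c generalizing i j a b c d τ μ
  · exact this hT.flip hcd hab hμ hμ1 hq' hτ hτ1 hq (le_of_not_ge hk)
  have hcd' := hcd.ne hT.flip
  have I1 := (inPos_iff hT a b).1 hab.2.2.1
  have I2 := inPos_self hT hab.2.2.1
  have J1 := (inPos_iff hT.flip c d).1 hcd.2.2.1
  have J2 := inPos_self hT.flip hcd.2.2.1
  have qi := hq.hf i
  have qj := hq.hf j
  have qk := hq.hf k
  have qi' := hq'.hf i
  have qj' := hq'.hf j
  have qk' := hq'.hf k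
  have V1 : hf i a < hf i q := by nlinarith
  have V2 : hf j q < hf j a := by nlinarith
  have V3 : hf k q < hf k a := by nlinarith
  have V1' : hf i q < hf i b := by nlinarith
  have V2' : hf j b < hf j q := by nlinarith
  have V3' : hf k b < hf k q := by nlinarith
  have W1 : hf i q < hf i c := by nlinarith
  have W2 : hf j c < hf j q := by nlinarith
  have W3 : hf k q < hf k c := by nlinarith
  have W2' : hf j q < hf j d := by nlinarith
  have hac : hf k c < hf k a := by
    refine lt_of_le_of_ne (by linarith) fun h0 => ?_
    have := h.hf_inj hcd.1 hab.1 h0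
    subst this
    linarith
  have hca : inPos i a c := by
    rw [inPos_iff hT]; exact ⟨by linarith, hac⟩
  have h1 : hf i b ≤ hf i c := by
    by_contra hlt
    refine h.cross_closer hT hab hcd.2.1 hcd.1 hcd'.symm hcd.2.2.2.1.symm hτ hτ1 hq
      (by linarith : 0 < 1 - μ) (by linarith) hq'.symm hca (not_le.1 hlt)
  have h2 : hf i b < hf i c := by
    refine lt_of_le_of_ne h1 fun h0 => ?_
    have := h.hf_inj hab.2.1 hcd.1 h0
    subst this
    linarith
  refine h.cross_closer hT.flip hcd hab.1 hab.2.1 (hab.ne hT) hab.2.2.2.1 hμ hμ1 hq' hτ hτ1 hq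
    ?_ (by linarith)
  rw [inPos_iff hT.flip]
  exact ⟨h2, by linarith⟩

/-! ### Consecutive canonical vertices -/

/-- Unoriented version of `ConsecCanon`: `v` and `w` are canonical vertices of `u` in a common
negative subcone, and no canonical vertex lies angularly between them. -/
def Consec (P : Set Pt) (S : Set (Pt × Pt)) (i : ℕ) (u v w : Pt) : Prop :=
  CanonVert P S i u v ∧ CanonVert P S i u w ∧ SameSubNeg S i u v w ∧ v ≠ w ∧
    ∀ x s t, CanonVert P S i u x → 0 < s → 0 < t → Bar u v w s t x → False

lemma Bar.swap {a q p x : Pt} {s t : ℝ} (h : Bar a q p s t x) : Bar a p q t s x := by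
  constructor
  · rw [h.1]; ring
  · rw [h.2]; ring

lemma Consec.symm {i : ℕ} {u v w : Pt} (h : Consec P S i u v w) : Consec P S i u w v :=
  ⟨h.2.1, h.1, fun z h1 h2 h3 => h.2.2.1 z h1 h2 (by rwa [mul_comm]), h.2.2.2.1.symm,
    fun x s t hx hs ht hb => h.2.2.2.2 x t s hx ht hs hb.swap⟩

lemma dd_self (a b : Pt) : dd a b b = 0 := by simp only [dd]; ring

lemma ConsecCanon.consec {i : ℕ} {u v w : Pt} (h : ConsecCanon P S i u v w) :
    Consec P S i u v w := by
  obtain ⟨h1, h2, h3, h4, h5⟩ := h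
  rw [crossP_eq] at h4
  refine ⟨h1, h2, h3, ?_, fun x s t hx hs ht hb => ?_⟩
  · rintro rfl
    rw [dd_self] at h4
    exact lt_irrefl _ h4
  · have e1 := dd_bar (Bar.left u v w) hb
    have e2 := dd_bar hb (Bar.right u v w)
    refine h5 x hx.1 hx (fun z hz hzc hlt => ?_) ⟨?_, ?_⟩
    · apply h3 z hz hzc
      rw [crossP_eq, crossP_eq] at hlt ⊢
      have e3 : dd u z x = s * dd u z v + t * dd u z w := by
        simp only [dd, hb.1, hb.2]; ring
      rw [e3] at hlt
      by_contra hge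
      have := mul_nonneg hs.le (mul_self_nonneg (dd u z v))
      have : 0 ≤ t * (dd u z v * dd u z w) := mul_nonneg ht.le (not_lt.1 hge)
      linarith
    · rw [crossP_eq, e1]
      have := mul_pos ht h4
      linarith
    · rw [crossP_eq, e2]
      have := mul_pos hs h4
      linarith

lemma consec_of_or {i : ℕ} {u v w : Pt} (h : ConsecCanon P S i u v w ∨ ConsecCanon P S i u w v) :
    Consec P S i u v w := h.elim ConsecCanon.consec fun h => h.consec.symm

section

variable {i j k : ℕ} {u v w : Pt}

lemma Consec.left_edge (hc : Consec P S i u v w) (hT : Tri i j k) : EdgeI P S i v u :=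
  hc.1.edge hT.1

lemma Consec.right_edge (hc : Consec P S i u v w) (hT : Tri i j k) : EdgeI P S i w u :=
  hc.2.1.edge hT.1

lemma Consec.dd_ne (h : Setup P S) (hc : Consec P S i u v w) (hT : Tri i j k) :
    dd u v w ≠ 0 :=
  h.dd_ne (hc.left_edge hT).2.1 hc.1.1 hc.2.1.1 ((hc.left_edge hT).ne hT).symm hc.2.2.2.1
    ((hc.right_edge hT).ne hT).symm

lemma Consec.dd_ne' (h : Setup P S) (hc : Consec P S i u v w) (hT : Tri i j k) :
    dd v u w ≠ 0 :=
  h.dd_ne hc.1.1 (hc.left_edge hT).2.1 hc.2.1.1 ((hc.left_edge hT).ne hT)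
    ((hc.right_edge hT).ne hT).symm hc.2.2.2.1

/-- The coordinates of `v` and `w` relative to `u`. -/
lemma Consec.ineqs (hc : Consec P S i u v w) (hT : Tri i j k) :
    hf j u < hf j v ∧ hf k u < hf k v ∧ hf j u < hf j w ∧ hf k u < hf k w ∧
      hf i v < hf i u ∧ hf i w < hf i u := by
  have h1 := (inPos_iff hT v u).1 (hc.left_edge hT).2.2.1
  have h2 := (inPos_iff hT w u).1 (hc.right_edge hT).2.2.1
  exact ⟨h1.1, h1.2, h2.1, h2.2, inPos_self hT (hc.left_edge hT).2.2.1,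
    inPos_self hT (hc.right_edge hT).2.2.1⟩

/-- Consecutive canonical vertices of `u` do not lie in each other's cone `Cᵢ`: otherwise the
lower one would see, in the triangle `uvw`, a vertex closer than `u`. -/
lemma Consec.not_above (h : Setup P S) (hc : Consec P S i u v w) (hT : Tri i j k) :
    ¬ inPos i v w := by
  intro hin
  have I := hc.ineqs hT
  have hE := hc.left_edge hT
  have hE' := hc.right_edge hT
  have hD := hc.dd_ne h hT
  have hD' := hc.dd_ne' h hT
  refine h.no_closer hT hE hc.2.1.1 one_pos le_rfl (q := u) ?_ hD' ?_ hin I.2.2.2.2.2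
  · constructor <;> ring
  intro c d m e σ ρ s t hcd hρ hρ1 hm hbm hs ht hst hσ hσ1 he hor
  rcases hor with ⟨ν, hν, hν1, hνe⟩ | rfl | ⟨ν, hν, hν1, hνe⟩
  · refine h.clear hE.1 hE.2.1 (hE.ne hT) hE.2.2.2.1 hcd hσ hσ1 he hν hν1 hνe hm ?_
    rw [dd_bar (Bar.left v u w) hbm]
    exact mul_ne_zero (by linarith) hD'
  · by_cases hce : c = e
    · subst hce
      have hbd : Bar c v w ((1 - s - t) / ρ) (t / ρ) d := by
        obtain ⟨m1, m2⟩ := hm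
        obtain ⟨b1, b2⟩ := hbm
        constructor
        · field_simp
          linear_combination b1 - m1
        · field_simp
          linear_combination b2 - m2
      have p1 : 0 < (1 - s - t) / ρ := div_pos (by linarith) hρ
      have p2 : 0 < t / ρ := div_pos ht hρ
      refine hc.2.2.1 d hcd ?_ ?_
      · show inPos i d c
        rw [inPos_iff hT, hbd.hf j, hbd.hf k]
        constructor <;> nlinarith
      · rw [crossP_eq, crossP_eq, dd_bar hbd (Bar.left c v w), dd_bar hbd (Bar.right c v w)]
        have : 0 < dd c v w ^ 2 := by positivity
        have := mul_pos (mul_pos p1 p2) this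
        nlinarith
    · have hσ0 : 0 < σ := by
        refine lt_of_le_of_ne hσ fun h0 => hce ?_
        subst h0
        ext <;> simp [he.1, he.2]
      have hcd' : c ≠ d := by
        rintro rfl
        apply hce
        ext <;> simp [he.1, he.2]
      exact h.not_on (h.constr_mem hcd).1 (h.constr_mem hcd).2 hE.2.1 hcd' hσ0 hσ1 he
  · refine h.clear hE.2.1 hE'.1 (hE'.ne hT).symm hE'.2.2.2.1.symm hcd hσ hσ1 he hν hν1 hνe hm ?_
    have : dd u w m = (1 - s - t) * dd v u w := by
      simp only [dd, hbm.1, hbm.2]; ring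
    rw [this]
    exact mul_ne_zero (by linarith) hD'

lemma Consec.quad (h : Setup P S) (hc : Consec P S i u v w) (hT : Tri i j k) :
    (hf j w < hf j v ∧ hf k v < hf k w) ∨ (hf j v < hf j w ∧ hf k w < hf k v) := by
  have h1 := hc.not_above h hT
  have h2 := hc.symm.not_above h hT
  rw [inPos_iff hT] at h1 h2
  have h3 : hf j v ≠ hf j w := fun h0 => hc.2.2.2.1 (h.hf_inj hc.1.1 hc.2.1.1 h0)
  have h4 : hf k v ≠ hf k w := fun h0 => hc.2.2.2.1 (h.hf_inj hc.1.1 hc.2.1.1 h0)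
  rcases lt_or_gt_of_ne h3 with h3 | h3 <;> rcases lt_or_gt_of_ne h4 with h4 | h4 <;> tauto

lemma decr_real {a b a' b' σ τ : ℝ} (ha' : 0 < a') (hb' : 0 < b')
    (h1 : a' < a) (h2 : b < b') (h3 : σ * a + τ * a' < 0) (h4 : σ * b + τ * b' < 0) :
    σ + τ < 0 := by
  by_contra hge
  rcases le_or_gt 0 σ with hσ | hσ
  · have := mul_nonneg hσ (sub_nonneg.2 h1.le)
    have := mul_nonneg (not_lt.1 hge) ha'.le
    linarith
  · have := mul_pos_of_neg_of_neg hσ (sub_neg.2 h2)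
    have := mul_nonneg (not_lt.1 hge) hb'.le
    linarith

/-- Moving in the direction of the cone `Cᵢ` moves away from the line `vw`, towards `u`. -/
lemma Consec.decr (h : Setup P S) (hc : Consec P S i u v w) (hT : Tri i j k) {x p : Pt}
    {s t s' t' : ℝ} (hx : Bar u v w s t x) (hp : Bar u v w s' t' p) (hin : inPos i x p) :
    s' + t' < s + t := by
  have I := hc.ineqs hT
  have g := (inPos_iff hT x p).1 hin
  rw [hx.hf j, hx.hf k, hp.hf j, hp.hf k] at g
  rcases hc.quad h hT with hq | hq
  · have := decr_real (σ := s' - s) (τ := t' - t) (a := hf j v - hf j u) (b := hf k v - hf k u)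
      (sub_pos.2 I.2.2.1) (sub_pos.2 I.2.2.2.1) (by linarith) (by linarith) (by linarith)
      (by linarith)
    linarith
  · have := decr_real (σ := s' - s) (τ := t' - t) (a := hf k v - hf k u) (b := hf j v - hf j u)
      (sub_pos.2 I.2.2.2.1) (sub_pos.2 I.2.2.1) (by linarith) (by linarith) (by linarith)
      (by linarith)
    linarith

/-- The triangle spanned by `u` and two consecutive canonical vertices contains no vertex in its
interior. A vertex of the interior farthest from the line `vw` would be visible from `u`, and
would be a canonical vertex between `v` and `w`. -/
lemma Consec.empty (h : Setup P S) (hc : Consec P S i u v w) (hT : Tri i j k) {x₀ : Pt}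
    {s₀ t₀ : ℝ} (hx₀ : x₀ ∈ P) (hb₀ : Bar u v w s₀ t₀ x₀) (hs₀ : 0 < s₀) (ht₀ : 0 < t₀)
    (hst₀ : s₀ + t₀ < 1) : False := by
  have I := hc.ineqs hT
  have hv := hc.left_edge hT
  have hw := hc.right_edge hT
  have hu := hv.2.1
  have huv := (hv.ne hT).symm
  have huw := (hw.ne hT).symm
  have hD := hc.dd_ne h hT
  obtain ⟨x, hx, s, t, hb, hs, ht, hst, hmin⟩ : ∃ x ∈ P, ∃ s t, Bar u v w s t x ∧ 0 < s ∧ 0 < t ∧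
      s + t < 1 ∧ ∀ x' ∈ P, ∀ s' t', Bar u v w s' t' x' → 0 < s' → 0 < t' → s' + t' < 1 →
        s + t ≤ s' + t' := by
    let R : Set Pt := {r | r ∈ P ∧ ∃ s t, Bar u v w s t r ∧ 0 < s ∧ 0 < t ∧ s + t < 1}
    have hR : R.Finite := h.fin.subset fun r hr => hr.1
    obtain ⟨r, ⟨hr, s, t, hb, hs, ht, hst⟩, hmin⟩ :=
      Set.exists_min_image R (fun r => (dd u r w + dd u v r) / dd u v w) hR
        ⟨x₀, hx₀, s₀, t₀, hb₀, hs₀, ht₀, hst₀⟩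
    refine ⟨r, hr, s, t, hb, hs, ht, hst, fun r' hr' s' t' hb' hs' ht' hst' => ?_⟩
    have h1 := hmin r' ⟨hr', s', t', hb', hs', ht', hst'⟩
    simp only [dd_bar hb (Bar.right u v w), dd_bar hb' (Bar.right u v w),
      dd_bar (Bar.left u v w) hb, dd_bar (Bar.left u v w) hb', ← add_mul,
      mul_div_cancel_right₀ _ hD] at h1
    linarith
  have hux : u ≠ x := by
    rintro rfl
    have := (hb.unique hD (Bar.base u v w)).1
    linarith
  have hsee : CanSee S x u := by
    by_contra hcs
    have key : ∀ c d m ρ μ s' t', Constr S c d → 0 < ρ → ρ < 1 → On c d ρ m → 0 < μ → μ < 1 →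
        On u x μ m → Bar u v w s' t' c → s' + t' ≤ μ * s + μ * t → False := by
      intro c d m ρ μ s' t' hcd hρ hρ1 hm hμ hμ1 hm' hbc hle
      have hbm := (Bar.base u v w).on hb hm'
      simp only [zero_add, sub_zero] at hbm
      have hμt : 0 < μ * t := by positivity
      have hμs : 0 < μ * s := by positivity
      have hμst : μ * s + μ * t < s + t := by nlinarith
      by_cases hin : 0 < s' ∧ 0 < t'
      · have := hmin c (h.constr_mem hcd).1 s' t' hbc hin.1 hin.2 (by linarith)
        linarith
      · obtain ⟨l, hl, hl1, hex⟩ := exit_real hμs hμt hin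
        have hbe := hbm.on hbc (on_pt m c l)
        have hoe : On c d ((1 - l) * ρ) (pt m c l) := by
          obtain ⟨g1, g2⟩ := hm
          constructor
          · simp only [pt, g1]; ring
          · simp only [pt, g2]; ring
        have hσ0 : 0 ≤ (1 - l) * ρ := mul_nonneg (by linarith) hρ.le
        have hσ1 : (1 - l) * ρ < 1 := by nlinarith
        set e := pt m c l with he
        set se := μ * s + l * (s' - μ * s) with hse
        set te := μ * t + l * (t' - μ * t) with hte
        have hsum : se + te < 1 := by
          have : se + te = μ * s + μ * t + l * (s' + t' - (μ * s + μ * t)) := by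
            rw [hse, hte]; ring
          nlinarith
        have hnu : e ≠ u := by
          intro heu
          by_cases hcu : c = u
          · subst hcu
            have hd0 : dd c x d = 0 := by
              have h1 : ρ * dd c x d = dd c x m := by simp only [dd, hm.1, hm.2]; ring
              have h2 : dd c x m = 0 := by simp only [dd, hm'.1, hm'.2]; ring
              rw [h2] at h1
              exact (mul_eq_zero.1 h1).resolve_left hρ.ne'
            by_cases hxd : x = d
            · subst hxd
              exact hcs (Or.inl hcd.symm)
            by_cases hcd' : c = d
            · subst hcd'
              have hmc : Bar c v w 0 0 m := by
                constructor
                · rw [hm.1]; ring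
                · rw [hm.2]; ring
              have := (hbm.unique hD hmc).1
              linarith
            · exact h.dd_ne hu hx (h.constr_mem hcd).2 hux hxd hcd' hd0
          · have hcd' : c ≠ d := by
              rintro rfl
              apply hcu
              rw [← heu]
              ext <;> simp [hoe.1, hoe.2]
            have hσ : 0 < (1 - l) * ρ := by
              refine lt_of_le_of_ne hσ0 fun h0 => hcu ?_
              rw [← h0] at hoe
              rw [← heu]
              ext <;> simp [hoe.1, hoe.2]
            exact h.not_on (h.constr_mem hcd).1 (h.constr_mem hcd).2 hu hcd' hσ hσ1 (heu ▸ hoe)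
        rcases hex with ⟨e1, e2⟩ | ⟨e1, e2⟩
        · rw [e1] at hbe hsum
          rcases e2.eq_or_lt with h0 | h0
          · rw [← h0] at hbe
            apply hnu
            ext
            · rw [hbe.1]; ring
            · rw [hbe.2]; ring
          · refine h.clear hu hw.1 huw hw.2.2.2.1.symm hcd hσ0 hσ1 hoe h0 (by linarith)
              ⟨by rw [hbe.1]; ring, by rw [hbe.2]; ring⟩ hm ?_
            rw [dd_bar (Bar.right u v w) hbm]
            exact mul_ne_zero (by linarith) hD
        · rw [e1] at hbe hsum
          rcases e2.eq_or_lt with h0 | h0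
          · rw [← h0] at hbe
            apply hnu
            ext
            · rw [hbe.1]; ring
            · rw [hbe.2]; ring
          · refine h.clear hu hv.1 huv hv.2.2.2.1.symm hcd hσ0 hσ1 hoe h0 (by linarith)
              ⟨by rw [hbe.1]; ring, by rw [hbe.2]; ring⟩ hm ?_
            rw [dd_bar (Bar.left u v w) hbm]
            exact mul_ne_zero (by linarith) hD
    have hcs' := hcs
    simp only [CanSee, not_or, not_forall, not_not] at hcs'
    obtain ⟨hnc, ⟨c, d⟩, hcS, m, hm1, hm2⟩ := hcs'
    obtain ⟨ρ, hρ, hρ1, hmc⟩ := mem_openSegment.1 hm1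
    rw [openSegment_symm] at hm2
    obtain ⟨μ, hμ, hμ1, hma⟩ := mem_openSegment.1 hm2
    have hcd : Constr S c d := Or.inl hcS
    obtain ⟨s1, t1, hb1⟩ := exists_bar hD c
    obtain ⟨s2, t2, hb2⟩ := exists_bar hD d
    have hbm := (Bar.base u v w).on hb hma
    simp only [zero_add, sub_zero] at hbm
    obtain ⟨u1, u2⟩ := hbm.unique hD (hb1.on hb2 hmc)
    have hX : (1 - ρ) * (s1 + t1 - (μ * s + μ * t)) + ρ * (s2 + t2 - (μ * s + μ * t)) = 0 := by
      linear_combination - u1 - u2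
    by_cases c1 : s1 + t1 ≤ μ * s + μ * t
    · exact key c d m ρ μ s1 t1 hcd hρ hρ1 hmc hμ hμ1 hma hb1 c1
    by_cases c2 : s2 + t2 ≤ μ * s + μ * t
    · exact key d c m (1 - ρ) μ s2 t2 hcd.symm (by linarith) (by linarith) hmc.symm hμ hμ1 hma
        hb2 c2
    nlinarith
  have hxu : inPos i x u := by
    rw [inPos_iff hT, hb.hf j, hb.hf k]
    constructor <;> nlinarith
  refine hc.2.2.2.2 x s t (EdgeI.canon hT.1 ⟨hx, hu, hxu, hsee, ?_⟩) hs ht hb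
  intro p hp hpx hxp hvp _
  rw [projLen_eq hT.1, projLen_eq hT.1]
  by_contra hlt
  have hlt' : hf i p < hf i u := by linarith
  have hxp' := (inPos_iff hT x p).1 hxp
  have hxpi := inPos_self hT hxp
  obtain ⟨s', t', hbp⟩ := exists_bar hD p
  have hdec := hc.decr h hT hb hbp hxp
  by_cases hin : 0 < s' ∧ 0 < t'
  · have := hmin p hp s' t' hbp hin.1 hin.2 (by linarith)
    linarith
  obtain ⟨l, hl, hl1, hex⟩ := exit_real hs ht hin
  have hbe := hb.on hbp (on_pt x p l)
  have hoe := on_pt x p l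
  set e := pt x p l with he
  set se := s + l * (s' - s) with hse
  set te := t + l * (t' - t) with hte
  have hsum : se + te < 1 := by
    have : se + te = s + t + l * (s' + t' - (s + t)) := by rw [hse, hte]; ring
    nlinarith
  have hnu : e ≠ u := by
    intro heu
    have := hoe.hf i
    rw [heu] at this
    nlinarith
  -- the segment from `x` to `p` leaves the triangle through one of the edges at `u`
  have key : ∀ y τ, EdgeI P S i y u → 0 < τ → τ < 1 → On u y τ e → False := by
    intro y τ hy hτ hτ1 hoy
    have hyj := (inPos_iff hT y u).1 hy.2.2.1
    have hl' : l < 1 := by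
      refine lt_of_le_of_ne hl1 fun h0 => ?_
      have hep : e = p := by
        rw [h0] at hoe
        ext
        · rw [hoe.1]; ring
        · rw [hoe.2]; ring
      rw [hep] at hoy
      exact h.not_on hu hy.1 hp (hy.ne hT).symm hτ hτ1 hoy
    refine h.cross_closer hT hy hx hp hpx.symm hvp (by linarith : 0 < 1 - τ) (by linarith) hoy.symm
      hl hl' hoe ?_ hlt'
    rw [inPos_iff hT]
    have a1 := hoe.hf j
    have a2 := hoe.hf k
    have b1 := hoy.hf j
    have b2 := hoy.hf k
    constructor <;> nlinarith
  rcases hex with ⟨e1, e2⟩ | ⟨e1, e2⟩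
  · rw [e1] at hbe hsum
    rcases e2.eq_or_lt with h0 | h0
    · rw [← h0] at hbe
      apply hnu
      ext
      · rw [hbe.1]; ring
      · rw [hbe.2]; ring
    · exact key w _ hw h0 (by linarith) ⟨by rw [hbe.1]; ring, by rw [hbe.2]; ring⟩
  · rw [e1] at hbe hsum
    rcases e2.eq_or_lt with h0 | h0
    · rw [← h0] at hbe
      apply hnu
      ext
      · rw [hbe.1]; ring
      · rw [hbe.2]; ring
    · exact key v _ hv h0 (by linarith) ⟨by rw [hbe.1]; ring, by rw [hbe.2]; ring⟩

/-- A vertex in the angle `uvw`, with apex `v`, lies beyond the segment `uw`. -/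
lemma Consec.beyond (h : Setup P S) (hc : Consec P S i u v w) (hT : Tri i j k) {x : Pt}
    {s t : ℝ} (hx : x ∈ P) (hb : Bar v u w s t x) (hs : 0 < s) (ht : 0 < t) : 1 < s + t := by
  by_contra hle
  rcases (not_lt.1 hle).eq_or_lt with h1 | h1
  · have hw := hc.right_edge hT
    refine h.not_on hw.2.1 hw.1 hx (hw.ne hT).symm ht (by linarith) ?_
    obtain rfl : s = 1 - t := by linarith
    constructor
    · rw [hb.1]; ring
    · rw [hb.2]; ring
  · refine hc.empty h hT hx (s₀ := 1 - s - t) (t₀ := t) ?_ (by linarith) ht (by linarith)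
    constructor
    · rw [hb.1]; ring
    · rw [hb.2]; ring

lemma on_beyond {x : Pt} {s t : ℝ} (hb : Bar v u w s t x) (hst : 1 < s + t) :
    On u w (t / (s + t)) (pt v x (1 / (s + t))) := by
  have : s + t ≠ 0 := by linarith
  constructor
  · simp only [pt, hb.1]; field_simp; ring
  · simp only [pt, hb.2]; field_simp; ring

/-- No constraint at `v` lies in the angle `uvw`. -/
lemma Consec.no_constr (h : Setup P S) (hc : Consec P S i u v w) (hT : Tri i j k) {z : Pt}
    {s t : ℝ} (hz : Constr S v z) (hb : Bar v u w s t z) (hs : 0 < s) (ht : 0 < t) : False := by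
  have hst := hc.beyond h hT (h.constr_mem hz).2 hb hs ht
  have hw := hc.right_edge hT
  have hpos : 0 < s + t := by linarith
  refine h.clear hw.2.1 hw.1 (hw.ne hT).symm hw.2.2.2.1.symm hz (by positivity)
    (by rw [div_lt_one hpos]; exact hst) (on_pt v z (1 / (s + t))) (div_pos ht hpos)
    (by rw [div_lt_one hpos]; linarith) (on_beyond hb hst) (ρ := 0) (m := v) ?_ ?_
  · constructor <;> ring
  · have : dd u w v = dd u v w * (-1) := by simp only [dd]; ring
    rw [this]
    exact mul_ne_zero (hc.dd_ne h hT) (by norm_num)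

/-- No edge at `v` of a cone index `j ≠ i` lies in the angle `uvw`. -/
lemma Consec.no_edge (h : Setup P S) (hc : Consec P S i u v w) (hT : Tri i j k) {z : Pt}
    {s t : ℝ} (hz : EdgeI P S j v z ∨ EdgeI P S j z v) (hb : Bar v u w s t z) (hs : 0 < s)
    (ht : 0 < t) : False := by
  have hzP : z ∈ P := by
    rcases hz with hz | hz
    · exact hz.2.1
    · exact hz.1
  have hst := hc.beyond h hT hzP hb hs ht
  have hw := hc.right_edge hT
  have hpos : 0 < s + t := by linarith
  have l1 : 0 < 1 / (s + t) := by positivity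
  have l2 : 1 / (s + t) < 1 := by rw [div_lt_one hpos]; exact hst
  have l3 : 0 < t / (s + t) := by positivity
  have l4 : t / (s + t) < 1 := by rw [div_lt_one hpos]; linarith
  rcases hz with hz | hz
  · exact h.planar hT hw hz (by linarith) (by linarith) (on_beyond hb hst).symm l1 l2
      (on_pt v z _)
  · exact h.planar hT hw hz (by linarith) (by linarith) (on_beyond hb hst).symm
      (by linarith : 0 < 1 - 1 / (s + t)) (by linarith) (on_pt v z _).symm

/-- If `w` lies on the side `hf j < 0 < hf k` of `v`, then no constraint in the cone `Cᵢ` of `v`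
lies on that side of the edge `vu`. -/
lemma Consec.no_constr_side (h : Setup P S) (hc : Consec P S i u v w) (hT : Tri i j k)
    (hk : hf k v < hf k w) {z : Pt} {s t : ℝ} (hz : Constr S v z) (hzc : inPos i v z)
    (hb : Bar v u w s t z) (ht : 0 < t) : False := by
  refine hc.no_constr h hT hz hb ?_ ht
  have h1 := ((inPos_iff hT v z).1 hzc).2
  rw [hb.hf k] at h1
  have I := hc.ineqs hT
  by_contra hs
  have := mul_nonneg_of_nonpos_of_nonpos (not_lt.1 hs) (sub_nonpos.2 I.2.1.le)
  have := mul_pos ht (sub_pos.2 hk)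
  linarith

/-- The previous statement in coordinates. -/
lemma Consec.cross_nonneg (h : Setup P S) (hc : Consec P S i u v w) (hT : Tri i j k)
    (hj : hf j w < hf j v) (hk : hf k v < hf k w) {z : Pt} (hz : Constr S v z)
    (hzc : inPos i v z) :
    0 ≤ (hf j u - hf j v) * (hf k z - hf k v) - (hf k u - hf k v) * (hf j z - hf j v) := by
  obtain ⟨κ, hκ, hdd⟩ := dd_hf hT
  have I := hc.ineqs hT
  obtain ⟨s, t, hb⟩ := exists_bar (hc.dd_ne' h hT) z
  have ht : t ≤ 0 := by
    by_contra ht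
    exact hc.no_constr_side h hT hk hz hzc hb (not_le.1 ht)
  have e1 : dd v u z = t * dd v u w := by
    rw [dd_bar (Bar.left v u w) hb]; ring
  rw [← hdd, e1]
  have e2 : κ * dd v u w < 0 := by
    rw [hdd]
    have := mul_pos (sub_pos.2 I.1) (sub_pos.2 hk)
    have := mul_pos (sub_pos.2 I.2.1) (sub_pos.2 hj)
    linarith
  have := mul_nonneg_of_nonpos_of_nonpos ht e2.le
  linarith

/-- On each side of the cone `Cᵢ` of `v` there is at most one canonical path edge. -/
lemma Consec.side_unique (h : Setup P S) (hc : Consec P S i u v w) (hT : Tri i j k)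
    (hj : hf j w < hf j v) (hk : hf k v < hf k w) {u' w' : Pt} (hc' : Consec P S i u' v w')
    (hj' : hf j w' < hf j v) (hk' : hf k v < hf k w') : u = u' ∧ w = w' := by
  obtain ⟨κ, hκ, hdd⟩ := dd_hf hT
  have I := hc.ineqs hT
  have huu : u = u' := by
    refine h.edge_unique hT (hc.left_edge hT) (hc'.left_edge hT) fun z hz hzc hlt => ?_
    have h1 := hc.cross_nonneg h hT hj hk hz hzc
    have h2 := hc'.cross_nonneg h hT hj' hk' hz hzc
    rw [← hdd] at h1 h2
    rw [crossP_eq, crossP_eq] at hlt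
    have h3 := mul_nonneg h1 h2
    have e1 : dd v z u = - dd v u z := by simp only [dd]; ring
    have e2 : dd v z u' = - dd v u' z := by simp only [dd]; ring
    rw [e1, e2] at hlt
    have hκ2 : 0 < κ ^ 2 := by positivity
    have := mul_neg_of_pos_of_neg hκ2 hlt
    linarith
  refine ⟨huu, ?_⟩
  subst huu
  have I' := hc'.ineqs hT
  obtain ⟨s, t, hb⟩ := exists_bar (hc.dd_ne h hT) w'
  have hD : ∀ y, hf j y < hf j v → hf k v < hf k y → 0 < κ * dd u v y := by
    intro y y1 y2
    rw [hdd]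
    have := mul_pos (sub_pos.2 I.1) (sub_pos.2 y2)
    have := mul_pos (sub_pos.2 I.2.1) (sub_pos.2 y1)
    linarith
  have p1 := hD w hj hk
  have p2 := hD w' hj' hk'
  have e1 : dd u v w' = t * dd u v w := by
    rw [dd_bar (Bar.left u v w) hb]; ring
  have ht : 0 < t := by
    rw [e1] at p2
    by_contra ht
    have := mul_nonneg (sub_nonneg.2 (not_lt.1 ht)) p1.le
    linarith
  rcases lt_trichotomy s 0 with hs | hs | hs
  · refine (hc'.2.2.2.2 w (-s / t) (1 / t) hc.2.1 (div_pos (by linarith) ht) (by positivity)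
      ⟨?_, ?_⟩).elim
    · rw [hb.1]; field_simp; ring
    · rw [hb.2]; field_simp; ring
  · by_contra hne
    refine h.dd_ne (hc.left_edge hT).2.1 hc.2.1.1 hc'.2.1.1 ((hc.right_edge hT).ne hT).symm hne
      ((hc'.right_edge hT).ne hT).symm ?_
    rw [dd_bar (Bar.right u v w) hb, hs]; ring
  · exact (hc.2.2.2.2 w' s t hc'.2.1 hs ht hb).elim

end

/-! ### Counting points separated by constraints -/

lemma card_of_interleaved {T Z : Set Pt} (hT : T.Finite) (hZ : Z.Finite) (θ : Pt → ℝ)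
    (h : ∀ u ∈ T, ∀ u' ∈ T, u ≠ u' → ∃ z ∈ Z, (θ u - θ z) * (θ u' - θ z) < 0) :
    T.ncard ≤ Z.ncard + 1 := by
  classical
  have hinj : Set.InjOn θ T := by
    intro u hu u' hu' he
    by_contra hne
    obtain ⟨z, -, hz⟩ := h u hu u' hu' hne
    rw [he] at hz
    exact absurd hz (not_lt.2 (mul_self_nonneg _))
  have key := Finset.card_le_of_interleaved (s := hT.toFinset.image θ) (t := hZ.toFinset.image θ)
    (by
      intro x hx y hy hxy _
      obtain ⟨u, hu, rfl⟩ := Finset.mem_image.1 hx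
      obtain ⟨u', hu', rfl⟩ := Finset.mem_image.1 hy
      rw [Set.Finite.mem_toFinset] at hu hu'
      obtain ⟨z, hz, hlt⟩ := h u hu u' hu' (fun he => hxy.ne (by rw [he]))
      refine ⟨θ z, Finset.mem_image_of_mem _ (hZ.mem_toFinset.2 hz), ?_⟩
      rcases mul_neg_iff.1 hlt with ⟨h1, h2⟩ | ⟨h1, h2⟩
      · linarith
      · constructor <;> linarith)
  rw [Finset.card_image_of_injOn (by simpa using hinj)] at key
  have h2 := Finset.card_image_le (s := hZ.toFinset) (f := θ)
  rw [Set.ncard_eq_toFinset_card T hT, Set.ncard_eq_toFinset_card Z hZ]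
  exact key.trans (by omega)

/-- Points of a single cone at `v` that are pairwise separated by a set `Z` of points of the same
cone number at most `|Z| + 1`: the slope in the coordinates `(hf j, hf k)` orders the cone. The
sign `σ` distinguishes positive from negative cones. -/
lemma cone_card {i j k : ℕ} (hT : Tri i j k) {v : Pt} {T Z : Set Pt} (hTf : T.Finite)
    (hZf : Z.Finite) (σ : ℝ)
    (hTc : ∀ x ∈ T, 0 < σ * (hf j x - hf j v) ∧ 0 < σ * (hf k x - hf k v))
    (hZc : ∀ x ∈ Z, 0 < σ * (hf j x - hf j v) ∧ 0 < σ * (hf k x - hf k v))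
    (h : ∀ u ∈ T, ∀ u' ∈ T, u ≠ u' →
      ∃ z ∈ Z, crossP (z - v) (u - v) * crossP (z - v) (u' - v) < 0) :
    T.ncard ≤ Z.ncard + 1 := by
  obtain ⟨κ, hκ, hdd⟩ := dd_hf hT
  refine card_of_interleaved hTf hZf (fun p => (hf j p - hf j v) / (hf k p - hf k v))
    fun u hu u' hu' hne => ?_
  obtain ⟨z, hz, hlt⟩ := h u hu u' hu' hne
  refine ⟨z, hz, ?_⟩
  rw [crossP_eq, crossP_eq] at hlt
  have hlt2 : (κ * dd v z u) * (κ * dd v z u') < 0 := by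
    have := mul_neg_of_pos_of_neg (by positivity : 0 < κ ^ 2) hlt
    linarith
  rw [hdd, hdd] at hlt2
  have b1 := (hTc u hu).2
  have b2 := (hTc u' hu').2
  have b3 := (hZc z hz).2
  have hσ : σ ≠ 0 := by rintro rfl; simp at b1
  generalize hf j u - hf j v = a₁ at *
  generalize hf j u' - hf j v = a₂ at *
  generalize hf j z - hf j v = a₃ at *
  generalize hf k u - hf k v = c₁ at *
  generalize hf k u' - hf k v = c₂ at *
  generalize hf k z - hf k v = c₃ at *
  have c1 : c₁ ≠ 0 := by rintro rfl; simp at b1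
  have c2 : c₂ ≠ 0 := by rintro rfl; simp at b2
  have c3 : c₃ ≠ 0 := by rintro rfl; simp at b3
  have e : (a₃ * c₁ - c₃ * a₁) * (a₃ * c₂ - c₃ * a₂) =
      (c₃ ^ 2 * ((σ * c₁) * (σ * c₂)) / σ ^ 2) * ((a₁ / c₁ - a₃ / c₃) * (a₂ / c₂ - a₃ / c₃)) := by
    field_simp
    ring
  rw [e] at hlt2
  exact (pos_iff_neg_of_mul_neg hlt2).1 (by positivity)

lemma Setup.finite_sub (h : Setup P S) {T : Set Pt} (hT : T ⊆ P) : T.Finite := h.fin.subset hT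

/-- The number of edges that `v` adds in the cone `Cᵢ` is at most its number of subcones. -/
lemma Setup.out_card (h : Setup P S) {i j k : ℕ} (hT : Tri i j k) (v : Pt) :
    {u | EdgeI P S i v u}.ncard ≤ cPos P S i v + 1 := by
  refine cone_card hT (h.finite_sub fun u hu => hu.2.1) (h.finite_sub fun z hz => hz.1) (-1)
    (v := v) (fun x hx => ?_) (fun x hx => ?_) fun u hu u' hu' hne => ?_
  · have := (inPos_iff hT v x).1 hx.2.2.1
    constructor <;> linarith
  · have := (inPos_iff hT v x).1 hx.2.2
    constructor <;> linarith
  · by_contra hno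
    push Not at hno
    exact hne (h.edge_unique hT hu hu' fun z hz hzc hlt =>
      absurd hlt (not_lt.2 (hno z ⟨(h.constr_mem hz).2, hz, hzc⟩)))

/-- The number of closest canonical vertices of `v` in `C̄ᵢ` is at most its number of subcones. -/
lemma Setup.closest_card (h : Setup P S) {i j k : ℕ} (hT : Tri i j k) (v : Pt) :
    {w | w ∈ P ∧ ClosestCanon P S i v w}.ncard ≤ cNeg P S i v + 1 := by
  refine cone_card hT (h.finite_sub fun u hu => hu.1) (h.finite_sub fun z hz => hz.1) 1
    (v := v) (fun x hx => ?_) (fun x hx => ?_) fun u hu u' hu' hne => ?_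
  · have := (inPos_iff hT x v).1 hx.2.1.2.2
    constructor <;> linarith
  · have := (inPos_iff hT x v).1 hx.2.2
    constructor <;> linarith
  · by_contra hno
    push Not at hno
    have hs : SameSubNeg S i v u u' := fun z hz hzc hlt =>
      absurd hlt (not_lt.2 (hno z ⟨(h.constr_mem hz).2, hz, hzc⟩))
    have h1 := hu.2.2 u' hu'.1 hu'.2.1 hs
    have h2 := hu'.2.2 u hu.1 hu.2.1 fun z hz hzc hlt => hs z hz hzc (by rwa [mul_comm])
    simp only [negProj] at h1 h2
    rw [projLen_eq hT.1, projLen_eq hT.1] at h1 h2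
    exact hne (h.hf_inj (i := i) hu.1 hu'.1 (le_antisymm (by linarith) (by linarith)))

/-! ### Charge of the positive cones -/

/-- The far endpoints of the edges charged to the positive cone `Cᵢ` of `v`, where `j` and `k` are
the two other cone indices. -/
def posSet (P : Set Pt) (S : Set (Pt × Pt)) (i j k : ℕ) (v : Pt) : Set Pt :=
  {u | u ∈ P ∧ ClosestCanon P S i u v} ∪
    {w | w ∈ P ∧ (∃ u ∈ P, ConsecCanon P S i u v w ∨ ConsecCanon P S i u w v) ∧
      (inNeg j v w ∨ inNeg k v w)}

lemma inNeg_ineqs {i j k : ℕ} (hT : Tri i j k) {v w : Pt} (hw : inNeg j v w) :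
    hf j w < hf j v ∧ hf k v < hf k w ∧ hf i v < hf i w := by
  have h1 := (inPos_iff hT.flip w v).1 hw
  exact ⟨inPos_self hT.flip hw, h1.2, h1.1⟩

/-- If `v` has a canonical path neighbour closer to the apex, it is not a closest canonical
vertex. -/
lemma Consec.not_closest {i : ℕ} (hi : i < 3) {u v w : Pt} (hc : Consec P S i u v w)
    (hw : hf i v < hf i w) : ¬ ClosestCanon P S i u v := by
  intro hcl
  have := hcl.2 w hc.2.1.1 hc.2.1 hc.2.2.1
  simp only [negProj] at this
  rw [projLen_eq hi, projLen_eq hi] at this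
  linarith

/-- If canonical path edges are charged to `Cᵢ` from one side only, there is a single one, and it
pays with the edge `vu` to its apex `u`, since `v` is not a closest canonical vertex of `u`. -/
lemma Setup.charge_pos_one (h : Setup P S) {i j k : ℕ} (hT : Tri i j k) {u v w : Pt}
    (hc : Consec P S i u v w) (hw : inNeg j v w)
    (hno : ∀ u' w', Consec P S i u' v w' → ¬ inNeg k v w') :
    (posSet P S i j k v).ncard ≤ cPos P S i v + 1 := by
  have I := inNeg_ineqs hT hw
  have hTf : {u | EdgeI P S i v u}.Finite := h.finite_sub fun u hu => hu.2.1
  have hsub : posSet P S i j k v ⊆ insert w ({u | EdgeI P S i v u} \ {u}) := by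
    rintro x (⟨hx, hxc⟩ | ⟨hx, ⟨u', -, hc'⟩, hn⟩)
    · refine Or.inr ⟨hxc.1.edge hT.1, ?_⟩
      rintro rfl
      exact hc.not_closest hT.1 I.2.2 hxc
    · have hc' := consec_of_or hc'
      rcases hn with hn | hn
      · have I' := inNeg_ineqs hT hn
        exact Or.inl (hc.side_unique h hT I.1 I.2.1 hc' I'.1 I'.2.1).2.symm
      · exact (hno u' x hc' hn).elim
  have h1 := Set.ncard_le_ncard hsub (hTf.sdiff.insert w)
  have h2 := Set.ncard_insert_le w ({u | EdgeI P S i v u} \ {u})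
  have h3 := Set.ncard_sdiff_singleton_add_one
    (show u ∈ {u | EdgeI P S i v u} from hc.left_edge hT) hTf
  have h4 := h.out_card hT v
  omega

/-- If both sides contribute a canonical path edge, their apexes are either distinct, and each edge
pays with its own apex, or equal, and the cone carries no other edge. -/
lemma Setup.charge_pos_two (h : Setup P S) {i j k : ℕ} (hT : Tri i j k) {u v w u' w' : Pt}
    (hc : Consec P S i u v w) (hw : inNeg j v w) (hc' : Consec P S i u' v w')
    (hw' : inNeg k v w') :
    (posSet P S i j k v).ncard ≤ max 2 (cPos P S i v + 1) := by
  have I := inNeg_ineqs hT hw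
  have I' := inNeg_ineqs hT.swap hw'
  have hTf : {u | EdgeI P S i v u}.Finite := h.finite_sub fun u hu => hu.2.1
  have hsub : posSet P S i j k v ⊆ insert w (insert w' (({u | EdgeI P S i v u} \ {u}) \ {u'})) := by
    rintro x (⟨hx, hxc⟩ | ⟨hx, ⟨u'', -, hc''⟩, hn⟩)
    · refine Or.inr (Or.inr ⟨⟨hxc.1.edge hT.1, ?_⟩, ?_⟩)
      · rintro rfl
        exact hc.not_closest hT.1 I.2.2 hxc
      · rintro rfl
        exact hc'.not_closest hT.1 I'.2.2 hxc
    · have hc'' := consec_of_or hc''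
      rcases hn with hn | hn
      · have J := inNeg_ineqs hT hn
        exact Or.inl (hc.side_unique h hT I.1 I.2.1 hc'' J.1 J.2.1).2.symm
      · have J := inNeg_ineqs hT.swap hn
        exact Or.inr (Or.inl (hc'.side_unique h hT.swap I'.1 I'.2.1 hc'' J.1 J.2.1).2.symm)
  have hfin : (({u | EdgeI P S i v u} \ {u}) \ {u'}).Finite := hTf.sdiff.sdiff
  have h1 := Set.ncard_le_ncard hsub ((hfin.insert w').insert w)
  have h2 := Set.ncard_insert_le w (insert w' (({u | EdgeI P S i v u} \ {u}) \ {u'}))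
  have h3 := Set.ncard_insert_le w' (({u | EdgeI P S i v u} \ {u}) \ {u'})
  have h4 := h.out_card hT v
  have hu := hc.left_edge hT
  have hu' := hc'.left_edge hT
  have h5 := Set.ncard_sdiff_singleton_add_one (show u ∈ {u | EdgeI P S i v u} from hu) hTf
  by_cases hne : u' = u
  · -- No constraint separates `u` from another vertex: `v` adds the single edge `vu`.
    subst hne
    have hE : ({u | EdgeI P S i v u} \ {u'}) \ {u'} = ∅ := by
      ext x
      refine ⟨fun hx => ?_, fun hx => hx.elim⟩
      refine hx.2 (h.edge_unique hT hx.1.1 hu fun z hz hzc hlt => ?_)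
      obtain ⟨κ, hκ, hdd⟩ := dd_hf hT
      have g1 := hc.cross_nonneg h hT I.1 I.2.1 hz hzc
      have g2 := hc'.cross_nonneg h hT.swap I'.1 I'.2.1 hz hzc
      have g3 : κ * dd v u' z = 0 := by rw [hdd]; linarith
      have g4 : dd v z u' = - dd v u' z := by simp only [dd]; ring
      rw [crossP_eq, crossP_eq, g4, (mul_eq_zero.1 g3).resolve_left hκ] at hlt
      simp at hlt
    rw [hE, Set.ncard_empty] at h3
    rw [hE] at h1 h2
    exact le_max_of_le_left (by omega)
  · have h6 := Set.ncard_sdiff_singleton_add_one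
      (show u' ∈ {u | EdgeI P S i v u} \ {u} from ⟨hu', hne⟩) hTf.sdiff
    exact le_max_of_le_right (by omega)

lemma posSet_swap {i j k : ℕ} {v : Pt} : posSet P S i j k v = posSet P S i k j v := by
  simp only [posSet, or_comm]

lemma Setup.charge_pos (h : Setup P S) {i j k : ℕ} (hT : Tri i j k) (v : Pt) :
    (posSet P S i j k v).ncard ≤ max 2 (cPos P S i v + 1) := by
  by_cases h1 : ∃ u w, Consec P S i u v w ∧ inNeg j v w
  · obtain ⟨u, w, hc, hw⟩ := h1
    by_cases h2 : ∃ u w, Consec P S i u v w ∧ inNeg k v w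
    · obtain ⟨u', w', hc', hw'⟩ := h2
      exact h.charge_pos_two hT hc hw hc' hw'
    · exact le_max_of_le_right (h.charge_pos_one hT hc hw fun u' w' a b => h2 ⟨u', w', a, b⟩)
  · by_cases h2 : ∃ u w, Consec P S i u v w ∧ inNeg k v w
    · obtain ⟨u', w', hc', hw'⟩ := h2
      rw [posSet_swap]
      exact le_max_of_le_right
        (h.charge_pos_one hT.swap hc' hw' fun u' w' a b => h1 ⟨u', w', a, b⟩)
    · refine le_max_of_le_right (le_trans (Set.ncard_le_ncard ?_ ?_) (h.out_card hT v))
      · rintro x (⟨hx, hxc⟩ | ⟨hx, ⟨u', -, hc'⟩, hn⟩)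
        · exact hxc.1.edge hT.1
        · rcases hn with hn | hn
          · exact (h1 ⟨u', x, consec_of_or hc', hn⟩).elim
          · exact (h2 ⟨u', x, consec_of_or hc', hn⟩).elim
      · exact h.finite_sub fun u hu => hu.2.1

/-! ### Charge of the negative cones -/

/-- The far endpoints of the edges charged to the negative cone `C̄ₙ` of `v`, where `i` and `k` are
the two other cone indices. -/
def negSet (P : Set Pt) (S : Set (Pt × Pt)) (n i k : ℕ) (v : Pt) : Set Pt :=
  {w | w ∈ P ∧ ClosestCanon P S n v w} ∪
    {w | w ∈ P ∧ ∃ u ∈ P,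
      (((ConsecCanon P S i u v w ∨ ConsecCanon P S i u w v) ∧ inPos k v w) ∨
       ((ConsecCanon P S k u v w ∨ ConsecCanon P S k u w v) ∧ inPos i v w))}

lemma negSet_swap {n i k : ℕ} {v : Pt} : negSet P S n i k v = negSet P S n k i v := by
  simp only [negSet, or_comm]

lemma inPos_ineqs {n i k : ℕ} (hT : Tri n i k) {v w : Pt} (hw : inPos k v w) :
    hf n w < hf n v ∧ hf i w < hf i v ∧ hf k v < hf k w := by
  have hT' : Tri k n i := hT.swap.flip
  have h1 := (inPos_iff hT' v w).1 hw
  exact ⟨h1.1, h1.2, inPos_self hT' hw⟩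

/-- If a canonical path edge `vw` is charged to `C̄ₙ`, then no vertex adds an edge to `v` in
that cone. -/
lemma Setup.neg_no_edge (h : Setup P S) {n i k : ℕ} (hT : Tri n i k) {u v w x : Pt}
    (hc : Consec P S i u v w) (hw : inPos k v w) (hx : EdgeI P S n x v) : False := by
  obtain ⟨s, t, hb⟩ := exists_bar (hc.dd_ne' h hT.flip) x
  have W := inPos_ineqs hT hw
  have U := inPos_ineqs hT.swap (hc.left_edge hT.flip).2.2.1
  have X := (inPos_iff hT x v).1 hx.2.2.1
  have sv := hf_sum hT v
  have su := hf_sum hT u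
  have sw := hf_sum hT w
  have ei := hb.hf i
  have ek := hb.hf k
  have hdet : 0 < (hf i u - hf i v) * (hf k w - hf k v) - (hf k u - hf k v) * (hf i w - hf i v) := by
    nlinarith
  have hs : 0 < s := by
    refine pos_of_mul_pos_left (b := (hf i u - hf i v) * (hf k w - hf k v) -
      (hf k u - hf k v) * (hf i w - hf i v)) ?_ hdet.le
    have e : s * ((hf i u - hf i v) * (hf k w - hf k v) - (hf k u - hf k v) * (hf i w - hf i v)) =
        (hf i x - hf i v) * (hf k w - hf k v) + (hf k x - hf k v) * (hf i v - hf i w) := by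
      rw [ei, ek]; ring
    rw [e]
    have := mul_pos (sub_pos.2 X.1) (sub_pos.2 W.2.2)
    have := mul_pos (sub_pos.2 X.2) (sub_pos.2 W.2.1)
    linarith
  have ht : 0 < t := by
    refine pos_of_mul_pos_left (b := (hf i u - hf i v) * (hf k w - hf k v) -
      (hf k u - hf k v) * (hf i w - hf i v)) ?_ hdet.le
    have e : t * ((hf i u - hf i v) * (hf k w - hf k v) - (hf k u - hf k v) * (hf i w - hf i v)) =
        (hf i u - hf i v) * (hf k x - hf k v) + (hf k v - hf k u) * (hf i x - hf i v) := by
      rw [ei, ek]; ring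
    rw [e]
    have := mul_pos (sub_pos.2 U.2.2) (sub_pos.2 X.2)
    have := mul_pos (sub_pos.2 U.2.1) (sub_pos.2 X.1)
    linarith
  exact hc.no_edge h hT.flip (Or.inr hx) hb hs ht

/-- An edge that `v` adds in the cone `Cₖ` containing the canonical path edge `vw` does not enter
the angle `uvw`. -/
lemma Setup.neg_bar (h : Setup P S) {n i k : ℕ} (hT : Tri n i k) {u v w u' : Pt}
    (hc : Consec P S i u v w) (hw : inPos k v w) (hu' : EdgeI P S k v u') :
    ∃ s t, Bar v u w s t u' ∧ s ≤ 0 ∧ 0 < t := by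
  obtain ⟨s, t, hb⟩ := exists_bar (hc.dd_ne' h hT.flip) u'
  have W := inPos_ineqs hT hw
  have U := inPos_ineqs hT.swap (hc.left_edge hT.flip).2.2.1
  have U' := inPos_ineqs hT hu'.2.2.1
  have sv := hf_sum hT v
  have su := hf_sum hT u
  have sw := hf_sum hT w
  have su' := hf_sum hT u'
  have ei := hb.hf i
  have ek := hb.hf k
  have hdet : 0 < (hf i u - hf i v) * (hf k w - hf k v) - (hf k u - hf k v) * (hf i w - hf i v) := by
    nlinarith
  have ht : 0 < t := by
    refine pos_of_mul_pos_left (b := (hf i u - hf i v) * (hf k w - hf k v) -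
      (hf k u - hf k v) * (hf i w - hf i v)) ?_ hdet.le
    have e : t * ((hf i u - hf i v) * (hf k w - hf k v) - (hf k u - hf k v) * (hf i w - hf i v)) =
        (hf i u - hf i v) * (hf k u' - hf k v) - (hf k u - hf k v) * (hf i u' - hf i v) := by
      rw [ei, ek]; ring
    rw [e]
    clear e ei ek hdet
    nlinarith
  refine ⟨s, t, hb, ?_, ht⟩
  by_contra hs
  exact hc.no_edge h hT.flip.swap (Or.inl hu') hb (not_le.1 hs) ht

/-- Two canonical path edges `vw` and `vw'` charged to `C̄ₙ` from different sides would force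
`w'` to be farther than `w` from `v`, measured along the bisector; by symmetry this is impossible.
The edge from `v` to the apex `u'` avoids the angle `uvw` and the edge `vu` avoids the angle
`u'vw'`, so `w'` lies on the ray `vu` or in the angle `uvw`, beyond the segment `uw`. -/
lemma Setup.neg_lt (h : Setup P S) {n i k : ℕ} (hT : Tri n i k) {u v w u' w' : Pt}
    (hc : Consec P S i u v w) (hw : inPos k v w) (hc' : Consec P S k u' v w')
    (hw' : inPos i v w') : hf n w' < hf n w := by
  have W := inPos_ineqs hT hw
  have W' := inPos_ineqs hT.swap hw'
  have huw := (hc.ineqs hT.flip).2.2.1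
  obtain ⟨s, t, hb, hs, ht⟩ := h.neg_bar hT hc hw (hc'.left_edge hT.swap.flip)
  obtain ⟨s', t', hb', hs', ht'⟩ := h.neg_bar hT.swap hc' hw' (hc.left_edge hT.flip)
  -- Eliminate `u'` from `u' = s u + t w` and `u = s' u' + t' w'` (relative to `v`).
  have hB : Bar v u w ((1 - s * s') / t') (-s' * t / t') w' := by
    constructor
    · have h1 := hb'.1
      rw [hb.1] at h1
      field_simp
      linarith
    · have h1 := hb'.2
      rw [hb.2] at h1
      field_simp
      linarith
  have hbn : 0 ≤ -s' * t / t' := by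
    have : 0 ≤ -s' := by linarith
    positivity
  generalize (1 - s * s') / t' = a at *
  generalize -s' * t / t' = b at *
  have ei := hB.hf i
  have en := hB.hf n
  have U := inPos_ineqs hT.swap (hc.left_edge hT.flip).2.2.1
  have ha : 0 < a := by
    by_contra ha
    have := mul_nonneg_of_nonpos_of_nonpos (not_lt.1 ha) (sub_nonpos.2 U.2.2.le)
    have := mul_nonneg hbn (sub_nonneg.2 W.2.1.le)
    have := mul_nonneg (sub_nonneg.2 (not_lt.1 ha)) (sub_nonneg.2 U.2.2.le)
    linarith [W'.2.2]
  rcases hbn.eq_or_lt with hb0 | hb0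
  · have huw' : u = w' := by
      by_contra hne
      refine h.dd_ne hc.1.1 (hc.left_edge hT.flip).2.1 hc'.2.1.1 ((hc.left_edge hT.flip).ne hT.flip)
        hne hc'.2.2.2.1 ?_
      rw [dd_bar (Bar.left v u w) hB, ← hb0]; ring
    rwa [← huw']
  · have hab := hc.beyond h hT.flip hc'.2.1.1 hB ha hb0
    rw [en]
    have := mul_pos ha (sub_pos.2 huw)
    have := mul_pos (sub_pos.2 hab) (sub_pos.2 W.1)
    linarith

/-- A canonical path edge charged to a negative cone is the only edge charged to it. -/
lemma Setup.neg_single (h : Setup P S) {n i k : ℕ} (hT : Tri n i k) {u v w : Pt}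
    (hc : Consec P S i u v w) (hw : inPos k v w) : negSet P S n i k v ⊆ {w} := by
  rintro x (⟨hx, hxc⟩ | ⟨hx, u', -, ⟨hc', hw'⟩ | ⟨hc', hw'⟩⟩)
  · exact (h.neg_no_edge hT hc hw (hxc.1.edge hT.1)).elim
  · have W := inPos_ineqs hT hw
    have W' := inPos_ineqs hT hw'
    exact (hc.side_unique h hT.flip W.1 W.2.2 (consec_of_or hc') W'.1 W'.2.2).2.symm
  · have h1 := h.neg_lt hT hc hw (consec_of_or hc') hw'
    have h2 := h.neg_lt hT.swap (consec_of_or hc') hw' hc hw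
    exact (lt_asymm h1 h2).elim

lemma Setup.charge_neg_one (h : Setup P S) {n i k : ℕ} (hT : Tri n i k) {u v w : Pt}
    (hc : Consec P S i u v w) (hw : inPos k v w) :
    (negSet P S n i k v).ncard ≤ cNeg P S n v + 1 := by
  have h1 := Set.ncard_le_ncard (h.neg_single hT hc hw) (Set.finite_singleton w)
  rw [Set.ncard_singleton] at h1
  omega

lemma Setup.charge_neg (h : Setup P S) {n i k : ℕ} (hT : Tri n i k) (v : Pt) :
    (negSet P S n i k v).ncard ≤ cNeg P S n v + 1 := by
  by_cases h1 : ∃ u w, Consec P S i u v w ∧ inPos k v w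
  · obtain ⟨u, w, hc, hw⟩ := h1
    exact h.charge_neg_one hT hc hw
  by_cases h2 : ∃ u w, Consec P S k u v w ∧ inPos i v w
  · obtain ⟨u, w, hc, hw⟩ := h2
    rw [negSet_swap]
    exact h.charge_neg_one hT.swap hc hw
  refine le_trans (Set.ncard_le_ncard ?_ (h.finite_sub fun u hu => hu.1)) (h.closest_card hT v)
  rintro x (hx | ⟨hx, u', -, ⟨hc', hw'⟩ | ⟨hc', hw'⟩⟩)
  · exact hx
  · exact (h1 ⟨u', x, consec_of_or hc', hw'⟩).elim
  · exact (h2 ⟨u', x, consec_of_or hc', hw'⟩).elim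

/-! ### Degrees -/

/-- A canonical path edge at `v` is charged to one of the cones of `v`. -/
lemma Setup.path_charged (h : Setup P S) {i j k : ℕ} (hT : Tri i j k) {u v w : Pt}
    (hc : ConsecCanon P S i u v w ∨ ConsecCanon P S i u w v) :
    w ∈ posSet P S i j k v ∨ w ∈ negSet P S j i k v ∨ w ∈ negSet P S k i j v := by
  have hC := consec_of_or hc
  have hu := (hC.left_edge hT).2.1
  have hw := hC.2.1.1
  have hi : hf i v ≠ hf i w := fun h0 => hC.2.2.2.1 (h.hf_inj hC.1.1 hw h0)
  rcases hC.quad h hT with q | q <;> rcases lt_or_gt_of_ne hi with hi | hi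
  · exact Or.inl (Or.inr ⟨hw, ⟨u, hu, hc⟩, Or.inl ((inPos_iff hT.flip w v).2 ⟨hi, q.2⟩)⟩)
  · exact Or.inr (Or.inl (Or.inr ⟨hw, u, hu, Or.inl ⟨hc,
      (inPos_iff hT.swap.flip v w).2 ⟨hi, q.1⟩⟩⟩))
  · exact Or.inl (Or.inr ⟨hw, ⟨u, hu, hc⟩, Or.inr ((inPos_iff hT.swap.flip w v).2 ⟨hi, q.1⟩)⟩)
  · exact Or.inr (Or.inr (Or.inr ⟨hw, u, hu, Or.inl ⟨hc,
      (inPos_iff hT.flip v w).2 ⟨hi, q.2⟩⟩⟩))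

/-- Every edge of `G₉` at `v` is charged to one of the cones of `v`. -/
lemma Setup.charged (h : Setup P S) {v w : Pt} (hw : w ∈ P) (he : G9Edge P S v w) :
    ∃ i < 3, w ∈ posSet P S i ((i + 1) % 3) ((i + 2) % 3) v ∨
      w ∈ negSet P S i ((i + 1) % 3) ((i + 2) % 3) v := by
  rcases he with ⟨u, hu, i, hi, hc⟩ | ⟨i, hi, hc | hc⟩
  · rcases h.path_charged (Tri.next hi) hc with h1 | h1 | h1
    · exact ⟨i, hi, Or.inl h1⟩
    · refine ⟨(i + 1) % 3, by omega, Or.inr ?_⟩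
      rw [negSet_swap, show ((i + 1) % 3 + 1) % 3 = (i + 2) % 3 by omega,
        show ((i + 1) % 3 + 2) % 3 = i by omega]
      exact h1
    · refine ⟨(i + 2) % 3, by omega, Or.inr ?_⟩
      rw [show ((i + 2) % 3 + 1) % 3 = i by omega,
        show ((i + 2) % 3 + 2) % 3 = (i + 1) % 3 by omega]
      exact h1
  · exact ⟨i, hi, Or.inr (Or.inl ⟨hw, hc⟩)⟩
  · exact ⟨i, hi, Or.inl (Or.inl ⟨hw, hc⟩)⟩

/-- The cones of `v` are disjoint, so their constraints number at most `c(v)`. -/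
lemma Setup.constr_sum (h : Setup P S) (v : Pt) :
    (cPos P S 0 v + cPos P S 1 v + cPos P S 2 v) + (cNeg P S 0 v + cNeg P S 1 v + cNeg P S 2 v) ≤
      cAll P S v := by
  classical
  have hfin : ∀ Q : Pt → Prop, {z | z ∈ P ∧ Constr S v z ∧ Q z}.Finite := fun Q =>
    h.finite_sub fun z hz => hz.1
  have hA : {z | z ∈ P ∧ Constr S v z}.Finite := h.finite_sub fun z hz => hz.1
  let Q : Fin 3 × Bool → Pt → Prop := fun a z => if a.2 then inPos a.1 v z else inNeg a.1 v z
  have key := Finset.card_biUnion (s := Finset.univ) (t := fun a => (hfin (Q a)).toFinset) (by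
    rintro ⟨a, b⟩ - ⟨a', b'⟩ - hne
    refine Finset.disjoint_left.2 fun z hz hz' => hne ?_
    rw [Set.Finite.mem_toFinset] at hz hz'
    have q := hz.2.2
    have q' := hz'.2.2
    cases b <;> cases b' <;> simp only [Q, inNeg] at q q'
    · simp [Fin.ext (inPos_unique a.2 a'.2 q q')]
    · exact (inPos_not_rev a.2 a'.2 q q').elim
    · exact (inPos_not_rev a.2 a'.2 q q').elim
    · simp [Fin.ext (inPos_unique a.2 a'.2 q q')])
  have hle := Finset.card_le_card (t := hA.toFinset)
    (s := Finset.univ.biUnion fun a => (hfin (Q a)).toFinset) (by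
      intro z hz
      obtain ⟨a, -, hz⟩ := Finset.mem_biUnion.1 hz
      rw [Set.Finite.mem_toFinset] at hz ⊢
      exact ⟨hz.1, hz.2.1⟩)
  rw [key, ← Set.ncard_eq_toFinset_card _ hA] at hle
  simp only [← fun a => Set.ncard_eq_toFinset_card _ (hfin (Q a)), Fintype.sum_prod_type, Fin.sum_univ_three,
    Fintype.sum_bool, Q] at hle
  simp only [cPos, cNeg, cAll]
  refine le_trans (le_of_eq ?_) hle
  simp
  ring

lemma Setup.degree (h : Setup P S) (v : Pt) :
    {w | w ∈ P ∧ w ≠ v ∧ G9Edge P S v w}.ncard ≤ cAll P S v + 9 := by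
  let A : ℕ → Set Pt := fun i => posSet P S i ((i + 1) % 3) ((i + 2) % 3) v
  let B : ℕ → Set Pt := fun i => negSet P S i ((i + 1) % 3) ((i + 2) % 3) v
  have hA : ∀ i < 3, (A i).ncard ≤ cPos P S i v + 2 := fun i hi =>
    (h.charge_pos (Tri.next hi) v).trans (max_le (by omega) (by omega))
  have hB : ∀ i < 3, (B i).ncard ≤ cNeg P S i v + 1 := fun i hi => h.charge_neg (Tri.next hi) v
  have hsub : {w | w ∈ P ∧ w ≠ v ∧ G9Edge P S v w} ⊆
      P ∩ ((A 0 ∪ A 1 ∪ A 2) ∪ (B 0 ∪ B 1 ∪ B 2)) := by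
    rintro w ⟨hw, -, he⟩
    refine ⟨hw, ?_⟩
    obtain ⟨i, hi, h1⟩ := h.charged hw he
    change w ∈ A i ∨ w ∈ B i at h1
    interval_cases i <;> simp only [Set.mem_union] <;> tauto
  have hAP : ∀ i, A i ⊆ P := by
    rintro i x (hx | hx) <;> exact hx.1
  have hBP : ∀ i, B i ⊆ P := by
    rintro i x (hx | hx) <;> exact hx.1
  have h1 := Set.ncard_le_ncard hsub (h.finite_sub Set.inter_subset_left)
  rw [Set.inter_eq_right.2 (by simp [hAP, hBP])] at h1
  have h2 := Set.ncard_union_le (A 0 ∪ A 1 ∪ A 2) (B 0 ∪ B 1 ∪ B 2)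
  have h3 := Set.ncard_union_le (A 0 ∪ A 1) (A 2)
  have h4 := Set.ncard_union_le (A 0) (A 1)
  have h5 := Set.ncard_union_le (B 0 ∪ B 1) (B 2)
  have h6 := Set.ncard_union_le (B 0) (B 1)
  have a0 := hA 0 (by norm_num)
  have a1 := hA 1 (by norm_num)
  have a2 := hA 2 (by norm_num)
  have b0 := hB 0 (by norm_num)
  have b1 := hB 1 (by norm_num)
  have b2 := hB 2 (by norm_num)
  have := h.constr_sum v
  omega

end

/-- **Lemmas 7, 8 and Theorem 4.** In `G₉` each positive cone of a vertex `v` is charged at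
most `max {2, cᵢ(v) + 1}`, each negative cone at most `c̄ᵢ(v) + 1`, and consequently every
vertex `v` has degree at most `c(v) + 9`. -/
theorem stmt_17 (P : Set Pt) (S : Set (Pt × Pt)) (hPfin : P.Finite)
    (hSP : ∀ c ∈ S, c.1 ∈ P ∧ c.2 ∈ P)
    (hSnc : ∀ c ∈ S, ∀ d ∈ S, c ≠ d → ¬ PCross c.1 c.2 d.1 d.2)
    (hGP : GenPos P) :
    (∀ v ∈ P, ∀ i < 3, chargePos P S i v ≤ max 2 (cPos P S i v + 1)) ∧
    (∀ v ∈ P, ∀ i < 3, chargeNeg P S i v ≤ cNeg P S i v + 1) ∧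
    (∀ v ∈ P, Set.ncard {w | w ∈ P ∧ w ≠ v ∧ G9Edge P S v w} ≤ cAll P S v + 9) := by
  have h : Setup P S := ⟨hPfin, hSP, hSnc, hGP⟩
  exact ⟨fun v _ i hi => h.charge_pos (Tri.next hi) v,
    fun v _ i hi => h.charge_neg (Tri.next hi) v, fun v _ => h.degree v⟩

end CHT6
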